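/- Suppose f is irreducible in ℤ[u^{±1}] and noncyclotomic. Then there exists a compact τ-invariant set C ⊆ Z̄_f × W_f^∘ (compact with respect to the product of the coordinatewise-convergence topology on Z̄_f and the sup-norm topology on W_f^∘) with π₁(C) = Z̄_f, where π₁ is the first coordinate projection. Moreover, for every compact τ-invariant set C ⊆ Z̄_f × W_f^∘ with π₁(C) = Z̄_f, one has h(τ|_C) = h(α_f) and ζ(C) = X_f. -/

import Mathlib

open Filter Topology Polynomial

noncomputable section

/-- `f(σ̄)` on real sequences. -/
def fsR (f : Polynomial ℤ) (w : ℤ → ℝ) : ℤ → ℝ :=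
  fun n => ∑ k ∈ Finset.range (f.natDegree + 1), (f.coeff k : ℝ) * w (n + (k : ℤ))

/-- Bounded real sequences. -/
def Bdd (w : ℤ → ℝ) : Prop := ∃ B : ℝ, ∀ n, |w n| ≤ B

/-- `f` is noncyclotomic. -/
def Noncyclotomic (f : Polynomial ℤ) : Prop :=
  ∀ θ : ℂ, Polynomial.aeval θ f = 0 → ∀ n : ℕ, 0 < n → θ ^ n ≠ 1

/-- The shift `σ̄` on real sequences. -/
def shiftR (w : ℤ → ℝ) : ℤ → ℝ := fun n => w (n + 1)

/-- `σ̄^k` on real sequences. -/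
def shiftIterR (k : ℤ) (w : ℤ → ℝ) : ℤ → ℝ := fun n => w (n + k)

/-- Membership in `W_f = f(σ̄)^{-1}(ℓ^∞(ℤ,ℤ))`. -/
def InWf (f : Polynomial ℤ) (w : ℤ → ℝ) : Prop :=
  Bdd w ∧ ∀ n, ∃ z : ℤ, fsR f w n = (z : ℝ)

/-- `Y_f = W_f ∩ [0,1)^ℤ`. -/
def YfSet (f : Polynomial ℤ) : Set (ℤ → ℝ) :=
  {w | InWf f w ∧ ∀ n, w n ∈ Set.Ico (0:ℝ) 1}

/-- `Z̄_f = f(σ̄)(Ȳ_f)`, where `Ȳ_f` is the closure of `Y_f` in the topology of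
coordinatewise convergence. -/
def ZbarR (f : Polynomial ℤ) : Set (ℤ → ℝ) := fsR f '' closure (YfSet f)

open BoundedContinuousFunction

/-- The circle `ℝ/ℤ`. -/
abbrev Torus := AddCircle (1 : ℝ)

/-- The shift `σ` on `𝕋^ℤ`. -/
def shiftT (x : ℤ → Torus) : ℤ → Torus := fun n => x (n + 1)

/-- `f(σ)` acting on `𝕋^ℤ`. -/
def fsT (f : Polynomial ℤ) (x : ℤ → Torus) : ℤ → Torus :=
  fun n => ∑ k ∈ Finset.range (f.natDegree + 1), f.coeff k • x (n + (k : ℤ))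

/-- `X_f = ker f(σ) ⊆ 𝕋^ℤ`. -/
def Xf (f : Polynomial ℤ) : Set (ℤ → Torus) := {x | ∀ n, fsT f x n = 0}

/-- The sequence `v^Δ`. -/
def vDelta : ℤ → ℝ := fun n => if n = 0 then 1 else 0

/-- `w⁺`. -/
def IsWplus (f : Polynomial ℤ) (w : ℤ → ℝ) : Prop :=
  Bdd w ∧ fsR f w = vDelta ∧ Tendsto w atTop (nhds 0)

/-- `w⁻`. -/
def IsWminus (f : Polynomial ℤ) (w : ℤ → ℝ) : Prop :=
  Bdd w ∧ fsR f w = vDelta ∧ Tendsto w atBot (nhds 0)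

/-- `ξ̄*(v)_k = ∑_{n≥0} v_n w⁻_{k-n} + ∑_{n<0} v_n w⁺_{k-n}`. -/
def xiStar (wp wm : ℤ → ℝ) (v : ℤ → ℤ) : ℤ → ℝ :=
  fun k => ∑' n : ℤ, (v n : ℝ) * (if 0 ≤ n then wm (k - n) else wp (k - n))

/-- The shift on `ℓ^∞(ℤ,ℝ)`, realized as bounded (automatically continuous) functions on
the discrete space `ℤ`, carrying the sup-norm topology. -/
def shiftB (w : ℤ →ᵇ ℝ) : ℤ →ᵇ ℝ :=
  w.compContinuous ⟨fun n => n + 1, continuous_of_discreteTopology⟩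

/-- The shift on integer sequences. -/
def shiftZseq (v : ℤ → ℤ) : ℤ → ℤ := fun n => v (n + 1)

/-- `W_f^∘ = ker f(σ̄) ∩ ℓ^∞(ℤ,ℝ)`, inside `ℤ →ᵇ ℝ` (with its sup-norm topology). -/
def WfCircB (f : Polynomial ℤ) : Set (ℤ →ᵇ ℝ) := {w | ∀ n, fsR f (⇑w) n = 0}

/-- The integer-sequence version of `Z̄_f`. -/
def ZbarZ (f : Polynomial ℤ) : Set (ℤ → ℤ) := {v | (fun n => (v n : ℝ)) ∈ ZbarR f}

/-- The skew-product map `τ(v, w) = (σ̄ v, σ̄ w + v₀ · σ̄(w^∘))` on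
`(ℤ → ℤ) × (ℤ →ᵇ ℝ)` (coordinatewise-convergence topology on the first factor,
sup-norm topology on the second). -/
def tauMap (w0 : ℤ →ᵇ ℝ) (p : (ℤ → ℤ) × (ℤ →ᵇ ℝ)) : (ℤ → ℤ) × (ℤ →ᵇ ℝ) :=
  (shiftZseq p.1, shiftB p.2 + p.1 0 • shiftB w0)

/-- `ζ(v, w) = ρ(ξ̄*(v) + w) ∈ 𝕋^ℤ`. -/
def zetaMap (wp wm : ℤ → ℝ) (p : (ℤ → ℤ) × (ℤ →ᵇ ℝ)) : ℤ → Torus :=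
  fun k => ((xiStar wp wm p.1 k + p.2 k : ℝ) : Torus)

/-- The one-sided shift on complex sequences, as a linear endomorphism. -/
def natShift : Module.End ℂ (ℕ → ℂ) := LinearMap.funLeft ℂ ℂ (fun n => n + 1)

lemma natShift_pow_apply (k : ℕ) (w : ℕ → ℂ) (n : ℕ) : (natShift ^ k) w n = w (n + k) := by
  induction k generalizing n with
  | zero => rfl
  | succ k ih =>
    rw [pow_succ', Module.End.mul_apply]
    change (natShift ^ k) w (n + 1) = _
    rw [ih]
    congr 1
    ring

lemma geometric_decay_of_linear_step {θ : ℂ} {w : ℕ → ℂ} (hw : Tendsto w atTop (𝓝 0)) {C r : ℝ}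
    (hC : 0 ≤ C) (hr : 0 ≤ r) (hr1 : r < 1) (h : ∀ n, ‖w (n + 1) - θ * w n‖ ≤ C * r ^ n) :
    ∃ D s : ℝ, 0 ≤ D ∧ 0 ≤ s ∧ s < 1 ∧ ∀ n, ‖w n‖ ≤ D * s ^ n := by
  rcases lt_or_ge ‖θ‖ 1 with hθ | hθ
  · obtain ⟨s, hs, hs1⟩ := exists_between (max_lt hθ hr1)
    have hts : ‖θ‖ < s := (le_max_left _ _).trans_lt hs
    have hrs : r ≤ s := (le_max_right _ _).trans hs.le
    have hs0 : 0 ≤ s := hr.trans hrs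
    refine ⟨max ‖w 0‖ (C / (s - ‖θ‖)), s, le_max_of_le_left (norm_nonneg _), hs0, hs1, ?_⟩
    intro n
    induction n with
    | zero => simp
    | succ n ih =>
      set D := max ‖w 0‖ (C / (s - ‖θ‖)) with hD
      have hCD : C ≤ D * (s - ‖θ‖) := by
        rw [← div_le_iff₀ (by linarith)]
        exact le_max_right _ _
      have h1 : ‖w (n + 1)‖ ≤ ‖θ‖ * ‖w n‖ + C * r ^ n := by
        calc ‖w (n + 1)‖ = ‖θ * w n + (w (n + 1) - θ * w n)‖ := by congr 1; ring
          _ ≤ ‖θ * w n‖ + ‖w (n + 1) - θ * w n‖ := norm_add_le _ _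
          _ ≤ _ := by rw [norm_mul]; linarith [h n]
      have h2 : C * r ^ n ≤ C * s ^ n := by gcongr
      have h3 : ‖θ‖ * ‖w n‖ ≤ ‖θ‖ * (D * s ^ n) := by gcongr
      have h4 : C * s ^ n ≤ D * (s - ‖θ‖) * s ^ n := by gcongr
      calc ‖w (n + 1)‖ ≤ ‖θ‖ * (D * s ^ n) + D * (s - ‖θ‖) * s ^ n := by linarith
        _ = D * s ^ (n + 1) := by ring
  · have hr' : 0 < 1 - r := by linarith
    refine ⟨C / (1 - r), r, by positivity, hr, hr1, ?_⟩
    set D := C / (1 - r) with hD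
    have hCD : C = D * (1 - r) := by rw [hD]; field_simp
    have hmono : Monotone fun n => ‖w n‖ - D * r ^ n := by
      refine monotone_nat_of_le_succ fun n => ?_
      have h1 : ‖w n‖ ≤ ‖θ * w n‖ := by
        rw [norm_mul]
        exact le_mul_of_one_le_left (norm_nonneg _) hθ
      have h2 : ‖θ * w n‖ ≤ ‖w (n + 1)‖ + ‖w (n + 1) - θ * w n‖ := by
        calc ‖θ * w n‖ = ‖w (n + 1) - (w (n + 1) - θ * w n)‖ := by congr 1; ring
          _ ≤ _ := norm_sub_le _ _
      have h3 := h n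
      have h4 : C * r ^ n = D * r ^ n - D * r ^ (n + 1) := by rw [hCD]; ring
      linarith
    have hlim : Tendsto (fun n => ‖w n‖ - D * r ^ n) atTop (𝓝 0) := by
      have := hw.norm.sub ((tendsto_pow_atTop_nhds_zero_of_lt_one hr hr1).const_mul D)
      simpa using this
    intro n
    have := hmono.ge_of_tendsto hlim n
    linarith

/-- A solution of a linear recurrence that tends to zero does so geometrically. -/
lemma geometric_decay_of_aeval_natShift_eq_zero (d : ℕ) : ∀ (g : ℂ[X]), g.natDegree = d → g ≠ 0 →
    ∀ w : ℕ → ℂ, Tendsto w atTop (𝓝 0) → aeval natShift g w = 0 →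
    ∃ D s : ℝ, 0 ≤ D ∧ 0 ≤ s ∧ s < 1 ∧ ∀ n, ‖w n‖ ≤ D * s ^ n := by
  induction d with
  | zero =>
    intro g hd hg w _ h
    rw [Polynomial.eq_C_of_natDegree_eq_zero hd] at h hg
    rw [aeval_C, Module.algebraMap_end_apply] at h
    have hw : w = 0 := (smul_eq_zero.1 h).resolve_left (by simpa using hg)
    exact ⟨0, 0, le_rfl, le_rfl, one_pos, by simp [hw]⟩
  | succ d ih =>
    intro g hd hg w hw h
    obtain ⟨θ, hθ⟩ := IsAlgClosed.exists_root g (by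
      rw [degree_eq_natDegree hg, hd]
      exact_mod_cast Nat.succ_ne_zero d)
    obtain ⟨q, rfl⟩ := dvd_iff_isRoot.2 hθ
    have hq : q ≠ 0 := right_ne_zero_of_mul hg
    have hqd : q.natDegree = d := by
      rw [natDegree_mul (X_sub_C_ne_zero θ) hq, natDegree_X_sub_C] at hd
      omega
    set w' : ℕ → ℂ := aeval natShift (X - Polynomial.C θ) w with hw'
    have hw'_apply : ∀ n, w' n = w (n + 1) - θ * w n := by
      intro n
      simp only [hw', map_sub, aeval_X, aeval_C, LinearMap.sub_apply, Module.algebraMap_end_apply]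
      rfl
    have hw'_lim : Tendsto w' atTop (𝓝 0) := by
      have := (hw.comp (tendsto_add_atTop_nat 1)).sub (hw.const_mul θ)
      simpa [funext hw'_apply, Function.comp_def] using this
    have hker : aeval natShift q w' = 0 := by
      rw [hw', ← Module.End.mul_apply, ← map_mul, mul_comm]
      exact h
    obtain ⟨D, s, hD, hs, hs1, hb⟩ := ih q hqd hq w' hw'_lim hker
    exact geometric_decay_of_linear_step hw hD hs hs1 fun n => by rw [← hw'_apply]; exact hb n

/-- A real sequence tending to zero which eventually satisfies a nontrivial linear recurrence is
absolutely summable. -/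
lemma summable_of_eventual_recurrence (m : ℕ) (a : ℕ → ℝ) (ha : ∃ j ≤ m, a j ≠ 0) (w : ℕ → ℝ)
    (hw : Tendsto w atTop (𝓝 0)) (N : ℕ)
    (h : ∀ n, N ≤ n → ∑ j ∈ Finset.range (m + 1), a j * w (n + j) = 0) :
    Summable fun n => |w n| := by
  set g : ℂ[X] := ∑ j ∈ Finset.range (m + 1), Polynomial.C (a j : ℂ) * X ^ j with hg
  have hg0 : g ≠ 0 := by
    obtain ⟨j, hj, haj⟩ := ha
    intro h0
    have := congrArg (fun p => p.coeff j) h0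
    simp [hg, coeff_C_mul, coeff_X_pow] at this
    exact haj (this hj)
  set u : ℕ → ℂ := fun n => (w (n + N) : ℂ) with hu
  have hu0 : Tendsto u atTop (𝓝 0) := by
    have := (Complex.continuous_ofReal.tendsto 0).comp (hw.comp (tendsto_add_atTop_nat N))
    simpa [hu, Function.comp_def] using this
  have hker : aeval natShift g u = 0 := by
    funext n
    have : aeval natShift g u n = ∑ j ∈ Finset.range (m + 1), (a j : ℂ) * u (n + j) := by
      simp only [hg, map_sum, map_mul, aeval_C, map_pow, aeval_X, LinearMap.sum_apply,
        Finset.sum_apply, Module.End.mul_apply, Module.algebraMap_end_apply, Pi.smul_apply,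
        smul_eq_mul, natShift_pow_apply]
    rw [this]
    have h1 := congrArg (fun x : ℝ => (x : ℂ)) (h (n + N) (Nat.le_add_left _ _))
    simp only [Complex.ofReal_sum, Complex.ofReal_mul, Complex.ofReal_zero] at h1
    rw [Pi.zero_apply, ← h1]
    refine Finset.sum_congr rfl fun j _ => ?_
    simp only [hu]
    congr 3
    ring
  obtain ⟨D, s, -, hs, hs1, hb⟩ :=
    geometric_decay_of_aeval_natShift_eq_zero _ g rfl hg0 u hu0 hker
  rw [← summable_nat_add_iff N]
  refine Summable.of_nonneg_of_le (fun n => abs_nonneg _) (fun n => ?_)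
    ((summable_geometric_of_lt_one hs hs1).mul_left D)
  simpa [hu] using hb n

lemma IsWplus.summable_nat {f : ℤ[X]} {wp : ℤ → ℝ} (hf : f ≠ 0) (hwp : IsWplus f wp) (k : ℤ) :
    Summable fun n : ℕ => |wp (k + n)| := by
  refine summable_of_eventual_recurrence f.natDegree (fun j => (f.coeff j : ℝ))
    ⟨_, le_rfl, by simpa using hf⟩ (fun n : ℕ => wp (k + n)) ?_ (k.natAbs + 1) fun n hn => ?_
  · exact hwp.2.2.comp (tendsto_atTop_add_const_left _ _ tendsto_natCast_atTop_atTop)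
  · have h := congrFun hwp.2.1 (k + n)
    simp only [fsR, vDelta] at h
    rw [if_neg (by omega)] at h
    rw [← h]
    refine Finset.sum_congr rfl fun j _ => ?_
    push_cast
    rw [add_assoc]

lemma IsWminus.summable_nat {f : ℤ[X]} {wm : ℤ → ℝ} (hf : f ≠ 0) (hwm : IsWminus f wm) (k : ℤ) :
    Summable fun n : ℕ => |wm (k - n)| := by
  refine summable_of_eventual_recurrence f.natDegree (fun j => (f.coeff (f.natDegree - j) : ℝ))
    ⟨0, Nat.zero_le _, by simpa using hf⟩ (fun n : ℕ => wm (k - n)) ?_ (k.natAbs + 1) fun n hn => ?_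
  · exact hwm.2.2.comp (tendsto_atBot_add_const_left _ k
      (tendsto_neg_atTop_atBot.comp tendsto_natCast_atTop_atTop))
  · have h := congrFun hwm.2.1 (k - n - f.natDegree)
    simp only [fsR, vDelta] at h
    rw [if_neg (by omega), ← Finset.sum_range_reflect] at h
    rw [← h]
    refine Finset.sum_congr rfl fun j hj => ?_
    rw [Finset.mem_range] at hj
    have e : f.natDegree + 1 - 1 - j = f.natDegree - j := by omega
    rw [e]
    congr 2
    push_cast [Nat.cast_sub (Nat.lt_succ_iff.1 hj)]
    ring

/-- The coefficients of `ξ̄*` are absolutely summable. -/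
lemma summable_abs_kernel {f : ℤ[X]} {wp wm : ℤ → ℝ} (hf : f ≠ 0) (hwp : IsWplus f wp)
    (hwm : IsWminus f wm) (k : ℤ) :
    Summable fun n : ℤ => |if 0 ≤ n then wm (k - n) else wp (k - n)| := by
  refine Summable.of_nat_of_neg_add_one ?_ ?_
  · simpa using hwm.summable_nat hf k
  · refine ((hwp.summable_nat hf (k + 1))).congr fun n => ?_
    rw [if_neg (by omega)]
    congr 2
    ring

lemma summable_xiStar {f : ℤ[X]} {wp wm : ℤ → ℝ} (hf : f ≠ 0) (hwp : IsWplus f wp)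
    (hwm : IsWminus f wm) {v : ℤ → ℝ} (hv : Bdd v) (k : ℤ) :
    Summable fun n : ℤ => v n * (if 0 ≤ n then wm (k - n) else wp (k - n)) := by
  obtain ⟨B, hB⟩ := hv
  refine Summable.of_norm_bounded ((summable_abs_kernel hf hwp hwm k).mul_left B) fun n => ?_
  rw [Real.norm_eq_abs, abs_mul]
  exact mul_le_mul_of_nonneg_right (hB n) (abs_nonneg _)

/-- Translation by `k` on `ℓ^∞(ℤ,ℝ)`. -/
def translB (k : ℤ) (w : ℤ →ᵇ ℝ) : ℤ →ᵇ ℝ :=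
  w.compContinuous ⟨fun n => n + k, continuous_of_discreteTopology⟩

@[simp] lemma translB_apply (k : ℤ) (w : ℤ →ᵇ ℝ) (n : ℤ) : translB k w n = w (n + k) := rfl

@[simp] lemma shiftB_apply (w : ℤ →ᵇ ℝ) (n : ℤ) : shiftB w n = w (n + 1) := rfl

/-- The element of `W_f^∘` by which `ξ̄*(f(σ̄) y)` differs from `y`. -/
def centralDefect (f : ℤ[X]) (w0 : ℤ →ᵇ ℝ) (y : ℤ → ℝ) : ℤ →ᵇ ℝ :=
  ∑ i ∈ Finset.range f.natDegree, y i •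
    ∑ j ∈ Finset.range (i + 1), (f.coeff j : ℝ) • translB ((j : ℤ) - i) w0

lemma centralDefect_apply (f : ℤ[X]) (w0 : ℤ →ᵇ ℝ) (y : ℤ → ℝ) (k : ℤ) :
    centralDefect f w0 y k = ∑ i ∈ Finset.range f.natDegree, y i *
      ∑ j ∈ Finset.range (i + 1), (f.coeff j : ℝ) * w0 (k + (j - i)) := by
  simp [centralDefect, BoundedContinuousFunction.sum_apply]

lemma continuous_centralDefect (f : ℤ[X]) (w0 : ℤ →ᵇ ℝ) : Continuous (centralDefect f w0) := by
  unfold centralDefect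
  fun_prop

lemma continuous_fsR (f : ℤ[X]) : Continuous (fsR f) := by
  unfold fsR
  fun_prop

lemma fsR_shiftIterR (f : ℤ[X]) (k : ℤ) (w : ℤ → ℝ) :
    fsR f (shiftIterR k w) = shiftIterR k (fsR f w) := by
  funext n
  simp only [fsR, shiftIterR]
  refine Finset.sum_congr rfl fun j _ => ?_
  congr 2
  ring

lemma fsR_add (f : ℤ[X]) (w w' : ℤ → ℝ) : fsR f (w + w') = fsR f w + fsR f w' := by
  funext n
  simp [fsR, mul_add, Finset.sum_add_distrib]

lemma fsR_sub (f : ℤ[X]) (w w' : ℤ → ℝ) : fsR f (w - w') = fsR f w - fsR f w' := by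
  funext n
  simp [fsR, mul_sub, Finset.sum_sub_distrib]

lemma fsR_smul (f : ℤ[X]) (c : ℝ) (w : ℤ → ℝ) : fsR f (c • w) = c • fsR f w := by
  funext n
  simp only [fsR, Pi.smul_apply, smul_eq_mul, Finset.mul_sum]
  exact Finset.sum_congr rfl fun j _ => by ring

/-- `W_f^∘` as a linear subspace of `ℓ^∞(ℤ,ℝ)`. -/
def centralSubmodule (f : ℤ[X]) : @Submodule ℝ (ℤ →ᵇ ℝ) _
    SeminormedAddCommGroup.toAddCommGroup.toAddCommMonoid NormedSpace.toModule where
  carrier := WfCircB f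
  zero_mem' := fun n => by simp [fsR]
  add_mem' := fun {a b} ha hb n => by
    have := congrFun (fsR_add f a b) n
    simp only [Pi.add_apply, ha n, hb n, add_zero] at this
    simpa using this
  smul_mem' := fun c a ha n => by
    have := congrFun (fsR_smul f c a) n
    simp only [Pi.smul_apply, ha n, smul_zero] at this
    exact this

lemma translB_mem_centralSubmodule {f : ℤ[X]} {w : ℤ →ᵇ ℝ} (k : ℤ)
    (hw : w ∈ centralSubmodule f) : translB k w ∈ centralSubmodule f := fun n => by
  have := congrFun (fsR_shiftIterR f k w) n
  exact this.trans (hw _)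

lemma centralDefect_mem {f : ℤ[X]} {w0 : ℤ →ᵇ ℝ} (h : w0 ∈ centralSubmodule f) (y : ℤ → ℝ) :
    centralDefect f w0 y ∈ centralSubmodule f :=
  Submodule.sum_mem _ fun _ _ => Submodule.smul_mem _ _ <| Submodule.sum_mem _ fun _ _ =>
    Submodule.smul_mem _ _ (translB_mem_centralSubmodule _ h)

lemma diff_mem_centralSubmodule {f : ℤ[X]} {wp wm : ℤ → ℝ} (hwp : IsWplus f wp)
    (hwm : IsWminus f wm) {w0 : ℤ →ᵇ ℝ} (hw0 : ∀ n, w0 n = wm n - wp n) :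
    w0 ∈ centralSubmodule f := fun n => by
  have : (w0 : ℤ → ℝ) = wm - wp := funext hw0
  rw [this, fsR_sub, hwp.2.1, hwm.2.1, sub_self, Pi.zero_apply]

/-- A bound for `f(σ̄) w` in terms of a bound for `w`. -/
def coeffNorm (f : ℤ[X]) : ℝ := ∑ k ∈ Finset.range (f.natDegree + 1), |(f.coeff k : ℝ)|

lemma abs_fsR_le (f : ℤ[X]) (w : ℤ → ℝ) (B : ℝ) (n : ℤ)
    (h : ∀ k ∈ Finset.range (f.natDegree + 1), |w (n + (k : ℤ))| ≤ B) :
    |fsR f w n| ≤ coeffNorm f * B := by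
  rw [fsR, coeffNorm, Finset.sum_mul]
  refine (Finset.abs_sum_le_sum_abs _ _).trans (Finset.sum_le_sum fun k hk => ?_)
  rw [abs_mul]
  exact mul_le_mul_of_nonneg_left (h k hk) (abs_nonneg _)

lemma coeffNorm_nonneg (f : ℤ[X]) : 0 ≤ coeffNorm f := Finset.sum_nonneg fun _ _ => abs_nonneg _

lemma xiStar_eq {f : ℤ[X]} (hf : f ≠ 0) {wp wm : ℤ → ℝ} (hwp : IsWplus f wp)
    (hwm : IsWminus f wm) {w0 : ℤ →ᵇ ℝ} (hw0 : ∀ n, w0 n = wm n - wp n) {y : ℤ → ℝ} (hy : Bdd y)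
    {v : ℤ → ℤ} (hv : ∀ n, (v n : ℝ) = fsR f y n) (k : ℤ) :
    xiStar wp wm v k = y k + centralDefect f w0 y k := by
  set m := f.natDegree with hm
  set K : ℤ → ℝ := fun n => if 0 ≤ n then wm (k - n) else wp (k - n) with hK
  have hw0' := diff_mem_centralSubmodule hwp hwm hw0
  have hterm : ∀ j : ℕ, HasSum (fun i : ℤ => y i * K (i - j))
      (∑' n : ℤ, y (n + j) * K n) := by
    intro j
    have hs : Summable fun n : ℤ => y (n + j) * K n :=
      summable_xiStar hf hwp hwm (v := fun n => y (n + j)) ⟨hy.choose, fun n => hy.choose_spec _⟩ k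
    have := (Equiv.subRight (j : ℤ)).hasSum_iff.2 hs.hasSum
    simpa [Function.comp_def] using this
  have hterm' : ∀ j : ℕ, HasSum (fun n : ℤ => y (n + j) * K n) (∑' n : ℤ, y (n + j) * K n) := by
    intro j
    exact (summable_xiStar hf hwp hwm (v := fun n => y (n + j))
      ⟨hy.choose, fun n => hy.choose_spec _⟩ k).hasSum
  have h1 : HasSum (fun n : ℤ => (v n : ℝ) * K n)
      (∑ j ∈ Finset.range (m + 1), (f.coeff j : ℝ) * ∑' n : ℤ, y (n + j) * K n) := by
    refine (hasSum_sum fun j _ => (hterm' j).mul_left (f.coeff j : ℝ)).congr_fun ?_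
    intro n
    rw [hv n, fsR, Finset.sum_mul]
    exact Finset.sum_congr rfl fun j _ => by ring
  have h2 : HasSum (fun i : ℤ => y i * ∑ j ∈ Finset.range (m + 1), (f.coeff j : ℝ) * K (i - j))
      (∑ j ∈ Finset.range (m + 1), (f.coeff j : ℝ) * ∑' n : ℤ, y (n + j) * K n) := by
    refine (hasSum_sum fun j _ => (hterm j).mul_left (f.coeff j : ℝ)).congr_fun ?_
    intro n
    rw [Finset.mul_sum]
    exact Finset.sum_congr rfl fun j _ => by ring
  set E : ℤ → ℝ := fun i => ∑ j ∈ Finset.range (m + 1),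
    if (j : ℤ) ≤ i then (f.coeff j : ℝ) * w0 (k + (j - i)) else 0 with hE
  have hkernel : ∀ i : ℤ, ∑ j ∈ Finset.range (m + 1), (f.coeff j : ℝ) * K (i - j) =
      (if i = k then 1 else 0) + E i := by
    intro i
    have hd := congrFun hwp.2.1 (k - i)
    simp only [fsR, vDelta] at hd
    have : (if i = k then (1 : ℝ) else 0) = if k - i = 0 then 1 else 0 := by
      simp only [sub_eq_zero, eq_comm]
    rw [this, ← hd, hE, ← Finset.sum_add_distrib]
    refine Finset.sum_congr rfl fun j _ => ?_
    have e1 : k - (i - (j : ℤ)) = k - i + j := by ring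
    have e2 : k + ((j : ℤ) - i) = k - i + j := by ring
    simp only [hK, sub_nonneg, e1, e2, hw0]
    split_ifs <;> ring
  have hE0 : ∀ i : ℤ, i ∉ (Finset.range m).map Nat.castEmbedding → E i = 0 := by
    intro i hi
    rcases lt_or_ge i 0 with hi0 | hi0
    · refine Finset.sum_eq_zero fun j _ => if_neg (by omega)
    · have him : (m : ℤ) ≤ i := by
        by_contra hlt
        refine hi (Finset.mem_map.2 ⟨i.toNat, Finset.mem_range.2 (by omega), ?_⟩)
        simp [Int.toNat_of_nonneg hi0]
      have := hw0' (k - i)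
      rw [fsR] at this
      rw [← this]
      refine Finset.sum_congr rfl fun j hj => ?_
      rw [Finset.mem_range] at hj
      rw [if_pos (by omega)]
      congr 2
      ring
  have h3 : HasSum (fun i : ℤ => y i * E i) (∑ i ∈ Finset.range m, y i * E i) := by
    have : HasSum (fun i : ℤ => y i * E i)
        (∑ i ∈ (Finset.range m).map Nat.castEmbedding, y i * E i) :=
      hasSum_sum_of_ne_finset_zero fun i hi => by rw [hE0 i hi, mul_zero]
    simpa using this
  have h4 : HasSum (fun i : ℤ => y i * if i = k then 1 else 0) (y k) := by
    have := hasSum_ite_eq k (y k)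
    refine this.congr_fun fun i => ?_
    split_ifs with h
    · rw [h, mul_one]
    · rw [mul_zero]
  have h5 := (h4.add h3).unique (h2.congr_fun fun i => by rw [hkernel]; ring)
  rw [xiStar, h1.tsum_eq, ← h5, centralDefect_apply]
  congr 1
  refine Finset.sum_congr rfl fun i hi => ?_
  congr 1
  rw [Finset.mem_range] at hi
  rw [hE]
  simp only [Nat.cast_le]
  rw [← Finset.sum_filter]
  refine Finset.sum_congr ?_ fun j _ => rfl
  ext j
  simp only [Finset.mem_filter, Finset.mem_range]
  omega

lemma xiStar_shift {f : ℤ[X]} (hf : f ≠ 0) {wp wm : ℤ → ℝ} (hwp : IsWplus f wp)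
    (hwm : IsWminus f wm) {w0 : ℤ →ᵇ ℝ} (hw0 : ∀ n, w0 n = wm n - wp n)
    {v : ℤ → ℤ} (hv : Bdd fun n => (v n : ℝ)) (k : ℤ) :
    xiStar wp wm (shiftZseq v) k = xiStar wp wm v (k + 1) - v 0 * w0 (k + 1) := by
  have h1 := (summable_xiStar hf hwp hwm hv (k + 1)).hasSum
  have h2 : HasSum (fun n : ℤ => if n = 0 then (v 0 : ℝ) * w0 (k + 1) else 0)
      ((v 0 : ℝ) * w0 (k + 1)) := hasSum_ite_eq 0 _
  have h3 := (Equiv.addRight (1 : ℤ)).hasSum_iff.2 (h1.sub h2)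
  refine (h3.congr_fun fun n => ?_).tsum_eq
  have e : k + 1 - (n + 1) = k - n := by ring
  simp only [shiftZseq, Function.comp_apply, Equiv.coe_addRight, e]
  by_cases hn : 0 ≤ n
  · rw [if_pos hn, if_pos (by omega), if_neg (by omega), sub_zero]
  · by_cases hn1 : n = -1
    · subst hn1
      simp [hw0]
      ring
    · rw [if_neg hn, if_neg (by omega), if_neg (by omega), sub_zero]

lemma closure_YfSet_subset (f : ℤ[X]) :
    closure (YfSet f) ⊆ {y | ∀ n, y n ∈ Set.Icc (0 : ℝ) 1} ∩
      {y | ∀ n, fsR f y n ∈ Set.range ((↑) : ℤ → ℝ)} := by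
  refine closure_minimal (fun y hy => ⟨fun n => Set.Ico_subset_Icc_self (hy.2 n), fun n => ?_⟩) ?_
  · obtain ⟨z, hz⟩ := hy.1.2 n
    exact ⟨z, hz.symm⟩
  · refine IsClosed.inter ?_ ?_
    · simp only [Set.ofPred_forall]
      exact isClosed_iInter fun n => isClosed_Icc.preimage (continuous_apply n)
    · simp only [Set.ofPred_forall]
      exact isClosed_iInter fun n => Int.isClosedEmbedding_coe_real.isClosed_range.preimage
        ((continuous_apply n).comp (continuous_fsR f))

lemma isCompact_closure_YfSet (f : ℤ[X]) : IsCompact (closure (YfSet f)) := by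
  have h : IsCompact (Set.pi Set.univ fun _ : ℤ => Set.Icc (0 : ℝ) 1) :=
    isCompact_univ_pi fun _ => isCompact_Icc
  exact h.of_isClosed_subset isClosed_closure fun y hy n _ => (closure_YfSet_subset f hy).1 n

lemma bdd_of_mem_closure_YfSet {f : ℤ[X]} {y : ℤ → ℝ} (hy : y ∈ closure (YfSet f)) : Bdd y :=
  ⟨1, fun n => by
    have := (closure_YfSet_subset f hy).1 n
    rw [abs_of_nonneg this.1]
    exact this.2⟩

lemma continuous_shiftIterR (k : ℤ) : Continuous (shiftIterR k) := by
  unfold shiftIterR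
  fun_prop

lemma shiftIterR_mem_closure_YfSet {f : ℤ[X]} {y : ℤ → ℝ} (k : ℤ) (hy : y ∈ closure (YfSet f)) :
    shiftIterR k y ∈ closure (YfSet f) := by
  refine map_mem_closure (continuous_shiftIterR k) hy fun z hz => ⟨⟨?_, fun n => ?_⟩, fun n => ?_⟩
  · obtain ⟨B, hB⟩ := hz.1.1
    exact ⟨B, fun n => hB _⟩
  · rw [fsR_shiftIterR]
    exact hz.1.2 _
  · exact hz.2 _

lemma mem_ZbarZ_iff {f : ℤ[X]} {v : ℤ → ℤ} :
    v ∈ ZbarZ f ↔ ∃ y ∈ closure (YfSet f), ∀ n, (v n : ℝ) = fsR f y n := by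
  simp only [ZbarZ, ZbarR, Set.mem_ofPred_eq, Set.mem_image, funext_iff, eq_comm]

lemma abs_le_of_mem_ZbarZ {f : ℤ[X]} {v : ℤ → ℤ} (hv : v ∈ ZbarZ f) (n : ℤ) :
    |(v n : ℝ)| ≤ coeffNorm f := by
  obtain ⟨y, hy, h⟩ := mem_ZbarZ_iff.1 hv
  rw [h n, ← mul_one (coeffNorm f)]
  refine abs_fsR_le f y 1 n fun k _ => ?_
  have := (closure_YfSet_subset f hy).1 (n + k)
  rw [abs_of_nonneg this.1]
  exact this.2

lemma bdd_of_mem_ZbarZ {f : ℤ[X]} {v : ℤ → ℤ} (hv : v ∈ ZbarZ f) : Bdd fun n => (v n : ℝ) :=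
  ⟨_, abs_le_of_mem_ZbarZ hv⟩

lemma zetaMap_tauMap {f : ℤ[X]} (hf : f ≠ 0) {wp wm : ℤ → ℝ} (hwp : IsWplus f wp)
    (hwm : IsWminus f wm) {w0 : ℤ →ᵇ ℝ} (hw0 : ∀ n, w0 n = wm n - wp n)
    {p : (ℤ → ℤ) × (ℤ →ᵇ ℝ)} (hp : Bdd fun n => (p.1 n : ℝ)) :
    zetaMap wp wm (tauMap w0 p) = shiftT (zetaMap wp wm p) := by
  funext k
  simp only [zetaMap, tauMap, shiftT, xiStar_shift hf hwp hwm hw0 hp]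
  congr 1
  simp

lemma continuousOn_zetaMap {f : ℤ[X]} (hf : f ≠ 0) {wp wm : ℤ → ℝ} (hwp : IsWplus f wp)
    (hwm : IsWminus f wm) {C : Set ((ℤ → ℤ) × (ℤ →ᵇ ℝ))} (hC : ∀ p ∈ C, p.1 ∈ ZbarZ f) :
    ContinuousOn (zetaMap wp wm) C := by
  refine continuousOn_pi.2 fun k => ?_
  refine (AddCircle.continuous_mk' 1).comp_continuousOn (ContinuousOn.add ?_ ?_)
  · refine continuousOn_tsum (u := fun n => coeffNorm f *
      |if 0 ≤ n then wm (k - n) else wp (k - n)|) (fun n => ?_)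
      ((summable_abs_kernel hf hwp hwm k).mul_left _) fun n p hp => ?_
    · exact Continuous.continuousOn (by fun_prop)
    · rw [Real.norm_eq_abs, abs_mul]
      exact mul_le_mul_of_nonneg_right (abs_le_of_mem_ZbarZ (hC p hp) n) (abs_nonneg _)
  · exact Continuous.continuousOn (by fun_prop)

/-- The pairs `(f(σ̄) y, w)` with `y ∈ Ȳ_f` and `ξ̄*(f(σ̄) y) + w = y`. -/
def canonicalCover (f : ℤ[X]) (w0 : ℤ →ᵇ ℝ) : Set ((ℤ → ℤ) × (ℤ →ᵇ ℝ)) :=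
  {p | ∃ y ∈ closure (YfSet f), (∀ n, (p.1 n : ℝ) = fsR f y n) ∧ p.2 = -centralDefect f w0 y}

lemma isCompact_canonicalCover (f : ℤ[X]) (w0 : ℤ →ᵇ ℝ) : IsCompact (canonicalCover f w0) := by
  have hemb : IsClosedEmbedding (Prod.map (Pi.map fun _ : ℤ => ((↑) : ℤ → ℝ))
      (id : (ℤ →ᵇ ℝ) → (ℤ →ᵇ ℝ))) :=
    (IsClosedEmbedding.piMap fun _ => Int.isClosedEmbedding_coe_real).prodMap IsClosedEmbedding.id
  have himg : IsCompact ((fun y => (fsR f y, -centralDefect f w0 y)) '' closure (YfSet f)) :=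
    (isCompact_closure_YfSet f).image
      ((continuous_fsR f).prodMk (continuous_centralDefect f w0).neg)
  convert hemb.isCompact_preimage himg using 1
  ext p
  simp only [canonicalCover, Set.mem_ofPred_eq, Set.mem_preimage, Set.mem_image, Prod.ext_iff,
    Prod.map_fst, Prod.map_snd, id, funext_iff, Pi.map_apply, eq_comm]

lemma tauMap_canonical {f : ℤ[X]} (hf : f ≠ 0) {wp wm : ℤ → ℝ} (hwp : IsWplus f wp)
    (hwm : IsWminus f wm) {w0 : ℤ →ᵇ ℝ} (hw0 : ∀ n, w0 n = wm n - wp n) {y : ℤ → ℝ}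
    (hy : y ∈ closure (YfSet f)) {v : ℤ → ℤ} (hv : ∀ n, (v n : ℝ) = fsR f y n) :
    tauMap w0 (v, -centralDefect f w0 y) =
      (shiftZseq v, -centralDefect f w0 (shiftIterR 1 y)) := by
  have hvb : Bdd fun n => (v n : ℝ) := bdd_of_mem_ZbarZ (mem_ZbarZ_iff.2 ⟨y, hy, hv⟩)
  refine Prod.ext rfl ?_
  ext k
  have h1 := xiStar_eq hf hwp hwm hw0 (bdd_of_mem_closure_YfSet hy) hv (k + 1)
  have h2 := xiStar_eq hf hwp hwm hw0
    (bdd_of_mem_closure_YfSet (shiftIterR_mem_closure_YfSet 1 hy)) (v := shiftZseq v)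
    (fun n => by rw [fsR_shiftIterR]; exact hv _) k
  have h3 := xiStar_shift hf hwp hwm hw0 hvb k
  have h4 : shiftIterR 1 y k = y (k + 1) := rfl
  have h5 : (v 0 • shiftB w0) k = v 0 * w0 (k + 1) := by simp
  have h6 : (tauMap w0 (v, -centralDefect f w0 y)).2 k =
      -centralDefect f w0 y (k + 1) + (v 0 • shiftB w0) k := rfl
  have h7 : (-centralDefect f w0 (shiftIterR 1 y)) k = -centralDefect f w0 (shiftIterR 1 y) k := rfl
  rw [h6, h5]
  linarith

lemma tauMap_image_canonicalCover {f : ℤ[X]} (hf : f ≠ 0) {wp wm : ℤ → ℝ} (hwp : IsWplus f wp)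
    (hwm : IsWminus f wm) {w0 : ℤ →ᵇ ℝ} (hw0 : ∀ n, w0 n = wm n - wp n) :
    tauMap w0 '' canonicalCover f w0 = canonicalCover f w0 := by
  apply Set.Subset.antisymm
  · rintro _ ⟨⟨v, w⟩, ⟨y, hy, hv, rfl⟩, rfl⟩
    rw [tauMap_canonical hf hwp hwm hw0 hy hv]
    exact ⟨shiftIterR 1 y, shiftIterR_mem_closure_YfSet 1 hy,
      fun n => by rw [fsR_shiftIterR]; exact hv _, rfl⟩
  · rintro ⟨v, w⟩ ⟨y, hy, hv, hw⟩
    have hy' := shiftIterR_mem_closure_YfSet (-1) hy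
    have hv' : ∀ n, ((v (n + -1) : ℤ) : ℝ) = fsR f (shiftIterR (-1) y) n := fun n => by
      rw [fsR_shiftIterR]
      exact hv _
    refine ⟨(fun n => v (n + -1), -centralDefect f w0 (shiftIterR (-1) y)),
      ⟨_, hy', hv', rfl⟩, ?_⟩
    rw [tauMap_canonical hf hwp hwm hw0 hy' hv']
    refine Prod.ext ?_ ?_
    · funext n
      simp [shiftZseq]
    · have : shiftIterR 1 (shiftIterR (-1) y) = y := by
        funext n
        simp [shiftIterR]
      rw [this]
      exact hw.symm

lemma fst_image_canonicalCover (f : ℤ[X]) (w0 : ℤ →ᵇ ℝ) :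
    Prod.fst '' canonicalCover f w0 = ZbarZ f := by
  ext v
  rw [mem_ZbarZ_iff]
  constructor
  · rintro ⟨p, ⟨y, hy, hv, -⟩, rfl⟩
    exact ⟨y, hy, hv⟩
  · rintro ⟨y, hy, hv⟩
    exact ⟨(v, -centralDefect f w0 y), ⟨y, hy, hv, rfl⟩, rfl⟩

lemma canonicalCover_subset {f : ℤ[X]} {w0 : ℤ →ᵇ ℝ} (hw0 : w0 ∈ centralSubmodule f) :
    canonicalCover f w0 ⊆ ZbarZ f ×ˢ WfCircB f := by
  rintro ⟨v, w⟩ ⟨y, hy, hv, hw⟩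
  refine ⟨mem_ZbarZ_iff.2 ⟨y, hy, hv⟩, ?_⟩
  have : w ∈ centralSubmodule f := by
    rw [show w = -centralDefect f w0 y from hw]
    exact Submodule.neg_mem _ (centralDefect_mem hw0 y)
  exact this

lemma irreducible_of_toLaurent {f : ℤ[X]} (h0 : f.coeff 0 ≠ 0)
    (hirr : Irreducible (toLaurent f)) : Irreducible f := by
  have key : ∀ a : ℤ[X], a ∣ f → IsUnit (toLaurent a) → IsUnit a := by
    intro a ha hu
    obtain ⟨c, hc⟩ := hu.exists_right_inv
    obtain ⟨n, c', hc'⟩ := LaurentPolynomial.exists_T_pow c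
    have h1 : a * c' = X ^ n := by
      apply toLaurent_injective
      rw [map_mul, hc', ← mul_assoc, hc, one_mul, map_pow, toLaurent_X, LaurentPolynomial.T_pow,
        mul_one]
    obtain ⟨k, -, hk⟩ := (dvd_prime_pow Polynomial.prime_X n).1 (Dvd.intro _ h1)
    rcases Nat.eq_zero_or_pos k with rfl | hkpos
    · rw [pow_zero] at hk
      exact associated_one_iff_isUnit.1 hk
    · refine absurd (X_dvd_iff.1 ((dvd_pow_self X hkpos.ne').trans (hk.symm.dvd.trans ha))) h0
  refine ⟨fun h => hirr.not_isUnit (h.map toLaurent), fun a b hab => ?_⟩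
  have h2 : toLaurent f = toLaurent a * toLaurent b := by rw [hab, map_mul]
  rcases hirr.isUnit_or_isUnit h2 with h | h
  · exact Or.inl (key a ⟨b, hab⟩ h)
  · exact Or.inr (key b ⟨a, by rw [hab, mul_comm]⟩ h)

lemma dvd_of_aeval_eq_zero {f P : ℤ[X]} (hm : 1 ≤ f.natDegree) (hirr : Irreducible f) {θ : ℂ}
    (hθ : aeval θ f = 0) (hP : aeval θ P = 0) : f ∣ P := by
  have hprim := hirr.isPrimitive (by omega)
  have hirrQ := (IsPrimitive.Int.irreducible_iff_irreducible_map_cast hprim).1 hirr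
  have hev : ∀ Q : ℤ[X], aeval θ (Q.map (Int.castRingHom ℚ)) = aeval θ Q := fun Q => by
    have := aeval_map_algebraMap ℚ θ Q
    simpa using this
  have hmin := minpoly.eq_of_irreducible hirrQ (by rw [hev, hθ] : aeval θ _ = 0)
  rw [IsPrimitive.Int.dvd_iff_map_cast_dvd_map_cast f P hprim]
  have h1 := minpoly.dvd ℚ θ (p := P.map (Int.castRingHom ℚ)) (by rw [hev, hP])
  rw [← hmin] at h1
  exact (Dvd.intro _ rfl).trans h1

/-- The shift on `𝕋^ℤ` as a `ℤ`-linear map. -/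
def shiftEnd : Module.End ℤ (ℤ → Torus) where
  toFun := shiftT
  map_add' _ _ := rfl
  map_smul' _ _ := rfl

lemma shiftEnd_pow_apply (k : ℕ) (x : ℤ → Torus) (n : ℤ) : (shiftEnd ^ k) x n = x (n + k) := by
  induction k generalizing n with
  | zero => simp
  | succ k ih =>
    rw [pow_succ', Module.End.mul_apply]
    change (shiftEnd ^ k) x (n + 1) = _
    rw [ih]
    congr 1
    push_cast
    ring

lemma fsT_eq_aeval (f : ℤ[X]) (x : ℤ → Torus) : fsT f x = aeval shiftEnd f x := by
  funext n
  rw [aeval_eq_sum_range, LinearMap.sum_apply, Finset.sum_apply]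
  simp [fsT, shiftEnd_pow_apply]

/-- The group `X_f`, as a subgroup of `𝕋^ℤ`. -/
def XfGroup (f : ℤ[X]) : AddSubgroup (ℤ → Torus) := (LinearMap.ker (aeval shiftEnd f)).toAddSubgroup

lemma mem_XfGroup {f : ℤ[X]} {x : ℤ → Torus} : x ∈ XfGroup f ↔ x ∈ Xf f := by
  change aeval shiftEnd f x = 0 ↔ _
  rw [← fsT_eq_aeval, funext_iff]
  rfl

lemma isClosed_Xf (f : ℤ[X]) : IsClosed (Xf f) := by
  simp only [Xf, Set.ofPred_forall]
  refine isClosed_iInter fun n => isClosed_singleton.preimage (?_ : Continuous fun x => fsT f x n)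
  unfold fsT
  fun_prop

lemma isCompact_Xf (f : ℤ[X]) : IsCompact (Xf f) := (isClosed_Xf f).isCompact

lemma continuous_shiftT : Continuous shiftT := by
  unfold shiftT
  fun_prop

lemma shiftT_mem_Xf {f : ℤ[X]} {x : ℤ → Torus} (hx : x ∈ Xf f) : shiftT x ∈ Xf f := fun n => by
  rw [← hx (n + 1)]
  simp only [fsT, shiftT, add_right_comm]

/-- The pairing of `𝕋^ℤ` with its dual group of finitely supported integer sequences. -/
def torusPairing (p : ℤ →₀ ℤ) (x : ℤ → Torus) : Torus := p.sum fun j a => a • x j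

/-- The value at `θ` of a finitely supported integer sequence, viewed as a Laurent polynomial. -/
def laurentEval (θ : ℂ) (p : ℤ →₀ ℤ) : ℂ := p.sum fun j a => (a : ℂ) * θ ^ j

lemma torusPairing_add_left (p q : ℤ →₀ ℤ) (x : ℤ → Torus) :
    torusPairing (p + q) x = torusPairing p x + torusPairing q x :=
  Finsupp.sum_add_index' (by simp) (by simp [add_smul])

lemma torusPairing_neg_left (p : ℤ →₀ ℤ) (x : ℤ → Torus) :
    torusPairing (-p) x = -torusPairing p x := by
  rw [eq_neg_iff_add_eq_zero, ← torusPairing_add_left]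
  simp [torusPairing]

lemma torusPairing_add_right (p : ℤ →₀ ℤ) (x y : ℤ → Torus) :
    torusPairing p (x + y) = torusPairing p x + torusPairing p y := by
  simp [torusPairing, Finsupp.sum, Finset.sum_add_distrib]

lemma continuous_torusPairing (p : ℤ →₀ ℤ) : Continuous (torusPairing p) := by
  unfold torusPairing Finsupp.sum
  fun_prop

lemma laurentEval_add (θ : ℂ) (p q : ℤ →₀ ℤ) :
    laurentEval θ (p + q) = laurentEval θ p + laurentEval θ q :=
  Finsupp.sum_add_index' (by simp) (by simp [add_mul])

/-- Translation of a finitely supported sequence, i.e. multiplication by `u^n`. -/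
def laurentShift (n : ℤ) (p : ℤ →₀ ℤ) : ℤ →₀ ℤ := p.embDomain (Equiv.addRight n).toEmbedding

lemma torusPairing_laurentShift (n : ℕ) (p : ℤ →₀ ℤ) (x : ℤ → Torus) :
    torusPairing (laurentShift n p) x = torusPairing p (shiftT^[n] x) := by
  have h : shiftT^[n] x = (shiftEnd ^ n) x := (Module.End.pow_apply shiftEnd n x).symm
  simp [torusPairing, laurentShift, Finsupp.sum_embDomain, h, shiftEnd_pow_apply]

lemma laurentEval_laurentShift {θ : ℂ} (hθ : θ ≠ 0) (n : ℤ) (p : ℤ →₀ ℤ) :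
    laurentEval θ (laurentShift n p) = laurentEval θ p * θ ^ n := by
  simp [laurentEval, laurentShift, Finsupp.sum_embDomain, zpow_add₀ hθ, Finsupp.sum_mul, mul_assoc]

lemma torusPairing_eq_zero_of_laurentEval {f : ℤ[X]} (hm : 1 ≤ f.natDegree) (hirr : Irreducible f)
    {θ : ℂ} (hθ0 : θ ≠ 0) (hθ : aeval θ f = 0) {p : ℤ →₀ ℤ} (hp : laurentEval θ p = 0)
    {x : ℤ → Torus} (hx : x ∈ Xf f) : torusPairing p x = 0 := by
  obtain ⟨N, hN⟩ : ∃ N : ℕ, ∀ j ∈ p.support, 0 ≤ j + N := by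
    obtain ⟨b, hb⟩ := p.support.bddBelow
    exact ⟨b.natAbs, fun j hj => by have := hb hj; omega⟩
  set P : ℤ[X] := ∑ j ∈ p.support, Polynomial.C (p j) * X ^ (j + N).toNat with hPdef
  have hP : aeval θ P = 0 := by
    have : aeval θ P = laurentEval θ p * θ ^ (N : ℤ) := by
      rw [hPdef, map_sum, laurentEval, Finsupp.sum_mul]
      refine Finset.sum_congr rfl fun j hj => ?_
      beta_reduce
      rw [mul_assoc, ← zpow_add₀ hθ0, map_mul, aeval_C, map_pow, aeval_X, ← zpow_natCast,
        Int.toNat_of_nonneg (hN j hj)]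
      simp
    rw [this, hp, zero_mul]
  obtain ⟨g, hg⟩ := dvd_of_aeval_eq_zero hm hirr hθ hP
  have h1 : aeval shiftEnd P x = 0 := by
    rw [hg, mul_comm, map_mul, Module.End.mul_apply, ← fsT_eq_aeval f x,
      show fsT f x = 0 from funext hx, map_zero]
  have h2 : aeval shiftEnd P x (-N) = torusPairing p x := by
    rw [hPdef, map_sum, LinearMap.sum_apply, Finset.sum_apply, torusPairing]
    refine Finset.sum_congr rfl fun j hj => ?_
    rw [map_mul, aeval_C, map_pow, aeval_X, Module.End.mul_apply, Module.algebraMap_end_apply,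
      Pi.smul_apply, shiftEnd_pow_apply, Int.toNat_of_nonneg (hN j hj)]
    congr 2
    ring
  rw [← h2, h1]
  rfl

/-- The point of `X_f` determined by a complex root of `f`. -/
lemma exists_mem_Xf_of_root {f : ℤ[X]} {θ : ℂ} (hθ0 : θ ≠ 0) (hθ : aeval θ f = 0) (c : ℂ) :
    (fun n : ℤ => (((c * θ ^ n).re : ℝ) : Torus)) ∈ Xf f := by
  intro n
  have : ∑ k ∈ Finset.range (f.natDegree + 1), f.coeff k • (c * θ ^ (n + (k : ℤ))).re = 0 := by
    have h : (c * θ ^ n * aeval θ f).re = 0 := by rw [hθ]; simp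
    rw [aeval_eq_sum_range, Finset.mul_sum, Complex.re_sum] at h
    rw [← h]
    refine Finset.sum_congr rfl fun k _ => ?_
    rw [zpow_add₀ hθ0, zpow_natCast, mul_smul_comm, mul_assoc, zsmul_eq_mul, zsmul_eq_mul]
    simp
  rw [fsT]
  have h2 := congrArg ((↑) : ℝ → Torus) this
  simpa using h2

lemma laurentEval_eq_zero_of_torusPairing {f : ℤ[X]} {θ : ℂ} (hθ0 : θ ≠ 0) (hθ : aeval θ f = 0)
    {p : ℤ →₀ ℤ} (hp : ∀ x ∈ Xf f, torusPairing p x = 0) : laurentEval θ p = 0 := by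
  by_contra hne
  have h := hp _ (exists_mem_Xf_of_root hθ0 hθ (1 / (2 * laurentEval θ p)))
  have h1 : torusPairing p
      (fun n : ℤ => (((1 / (2 * laurentEval θ p) * θ ^ n).re : ℝ) : Torus)) =
      ((1 / 2 : ℝ) : Torus) := by
    have h2 : p.sum (fun j a => a • (1 / (2 * laurentEval θ p) * θ ^ j).re) = 1 / 2 := by
      have h3 : (1 / (2 * laurentEval θ p) * laurentEval θ p).re = 1 / 2 := by
        rw [show 1 / (2 * laurentEval θ p) * laurentEval θ p = ((1 / 2 : ℝ) : ℂ) by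
          push_cast; field_simp]
        exact Complex.ofReal_re _
      rw [← h3]
      generalize 1 / (2 * laurentEval θ p) = c
      rw [laurentEval, Finsupp.mul_sum, Finsupp.sum, Finsupp.sum, Complex.re_sum]
      refine Finset.sum_congr rfl fun j _ => ?_
      rw [mul_left_comm, zsmul_eq_mul]
      simp
    rw [← h2, torusPairing, Finsupp.sum, Finsupp.sum]
    simp
  rw [h1, AddCircle.coe_eq_zero_iff] at h
  obtain ⟨n, hn⟩ := h
  rw [zsmul_eq_mul, mul_one] at hn
  have h4 : ((2 * n : ℤ) : ℝ) = (1 : ℤ) := by push_cast; linarith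
  have h5 := Int.cast_injective h4
  omega

lemma eventually_laurentEval_ne_zero {f : ℤ[X]} (hnc : Noncyclotomic f) {θ : ℂ} (hθ0 : θ ≠ 0)
    (hθ : aeval θ f = 0) {p q : ℤ →₀ ℤ} (hq : laurentEval θ q ≠ 0) :
    ∀ᶠ n : ℕ in atTop, laurentEval θ (p + laurentShift n q) ≠ 0 := by
  have hinj : ∀ n k : ℕ, n < k → θ ^ n = θ ^ k → False := by
    intro n k hnk h
    refine hnc θ hθ (k - n) (by omega) ?_
    rw [← Nat.sub_add_cancel hnk.le, pow_add] at h
    simpa [hθ0] using h.symm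
  by_cases hex : ∃ n0 : ℕ, laurentEval θ (p + laurentShift n0 q) = 0
  · obtain ⟨n0, hn0⟩ := hex
    filter_upwards [eventually_gt_atTop n0] with n hn h
    rw [laurentEval_add, laurentEval_laurentShift hθ0, zpow_natCast] at hn0 h
    have : laurentEval θ q * (θ ^ n0 - θ ^ n) = 0 := by linear_combination hn0 - h
    exact hinj n0 n hn (by simpa [hq, sub_eq_zero] using this)
  · push Not at hex
    exact Eventually.of_forall hex

/-- A uniformly bounded sequence of linear maps that converges to zero on a set with dense span
converges to zero pointwise. -/
lemma tendsto_zero_of_dense_span {E : Type*} [NormedAddCommGroup E] [NormedSpace ℂ E]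
    (Φ : ℕ → E →ₗ[ℂ] ℂ) {B : ℝ} (hB : ∀ n x, ‖Φ n x‖ ≤ B * ‖x‖) {s : Set E}
    (hs : Dense (Submodule.span ℂ s : Set E)) (h : ∀ x ∈ s, Tendsto (fun n => Φ n x) atTop (𝓝 0))
    (x : E) : Tendsto (fun n => Φ n x) atTop (𝓝 0) := by
  have hspan : ∀ y ∈ Submodule.span ℂ s, Tendsto (fun n => Φ n y) atTop (𝓝 0) := by
    intro y hy
    induction hy using Submodule.span_induction with
    | mem y hy => exact h y hy
    | zero => simp
    | add y z _ _ hy hz => simpa using hy.add hz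
    | smul a y _ hy => simpa using hy.const_mul a
  rw [Metric.tendsto_atTop]
  intro ε hε
  have hB' : 0 < |B| + 1 := by positivity
  obtain ⟨y, hy, hxy⟩ := hs.exists_dist_lt x (show 0 < ε / 2 / (|B| + 1) by positivity)
  obtain ⟨N, hN⟩ := Metric.tendsto_atTop.1 (hspan y hy) (ε / 2) (by positivity)
  refine ⟨N, fun n hn => ?_⟩
  have h1 := hN n hn
  rw [dist_zero_right] at h1 ⊢
  rw [dist_eq_norm, lt_div_iff₀ hB'] at hxy
  have h2 : ‖Φ n (x - y)‖ ≤ ε / 2 := by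
    refine (hB n _).trans ?_
    nlinarith [le_abs_self B, norm_nonneg (x - y)]
  calc ‖Φ n x‖ = ‖Φ n (x - y) + Φ n y‖ := by rw [← map_add, sub_add_cancel]
    _ ≤ _ := norm_add_le _ _
    _ < ε := by linarith

/-- The character of `𝕋^ℤ` attached to `p`, restricted to `X_f`. -/
def torusChar (f : ℤ[X]) (p : ℤ →₀ ℤ) : C(XfGroup f, ℂ) where
  toFun x := AddCircle.toCircle (torusPairing p (x : ℤ → Torus))
  continuous_toFun := continuous_subtype_val.comp (AddCircle.continuous_toCircle.comp
    ((continuous_torusPairing p).comp continuous_subtype_val))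

lemma torusChar_apply (f : ℤ[X]) (p : ℤ →₀ ℤ) (x : XfGroup f) :
    torusChar f p x = AddCircle.toCircle (torusPairing p (x : ℤ → Torus)) := rfl

lemma torusChar_add (f : ℤ[X]) (p q : ℤ →₀ ℤ) :
    torusChar f (p + q) = torusChar f p * torusChar f q := by
  ext x
  simp [torusChar_apply, torusPairing_add_left, AddCircle.toCircle_add]

lemma torusChar_neg (f : ℤ[X]) (p : ℤ →₀ ℤ) : torusChar f (-p) = star (torusChar f p) := by
  ext x
  rw [torusChar_apply, torusPairing_neg_left, AddCircle.toCircle_neg, Circle.coe_inv_eq_conj]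
  rfl

instance compactSpace_XfGroup (f : ℤ[X]) : CompactSpace (XfGroup f) := by
  refine isCompact_iff_compactSpace.1 (?_ : IsCompact (XfGroup f : Set (ℤ → Torus)))
  rw [show (XfGroup f : Set (ℤ → Torus)) = Xf f from Set.ext fun x => mem_XfGroup]
  exact isCompact_Xf f

lemma torusChar_eq_one (f : ℤ[X]) (p : ℤ →₀ ℤ) (h : ∀ x ∈ Xf f, torusPairing p x = 0) :
    torusChar f p = 1 := by
  ext x
  simp [torusChar_apply, h x (mem_XfGroup.1 x.2)]

/-- The characters span a dense subspace of the continuous functions on `X_f`. -/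
lemma dense_span_torusChar (f : ℤ[X]) :
    Dense (Submodule.span ℂ (Set.range (torusChar f)) : Set C(XfGroup f, ℂ)) := by
  let A : StarSubalgebra ℂ C(XfGroup f, ℂ) :=
    { Algebra.adjoin ℂ (Set.range (torusChar f)) with
      star_mem' := by
        change Algebra.adjoin ℂ (Set.range (torusChar f)) ≤
          star (Algebra.adjoin ℂ (Set.range (torusChar f)))
        refine Algebra.adjoin_le ?_
        rintro - ⟨p, rfl⟩
        exact Algebra.subset_adjoin ⟨-p, torusChar_neg f p⟩ }
  have hA : (A : Set C(XfGroup f, ℂ)) = Submodule.span ℂ (Set.range (torusChar f)) := by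
    change ((Subalgebra.toSubmodule (Algebra.adjoin ℂ (Set.range (torusChar f))) :
      Submodule ℂ C(XfGroup f, ℂ)) : Set C(XfGroup f, ℂ)) = _
    rw [Algebra.adjoin_eq_span_of_subset]
    refine Set.Subset.trans ?_ Submodule.subset_span
    intro x hx
    refine Submonoid.closure_induction (fun _ => id)
      ⟨0, torusChar_eq_one f 0 fun _ _ => by simp [torusPairing]⟩ ?_ hx
    rintro - - - - ⟨p, rfl⟩ ⟨q, rfl⟩
    exact ⟨p + q, torusChar_add f p q⟩
  have hsep : A.SeparatesPoints := by
    intro x y hxy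
    obtain ⟨j, hj⟩ : ∃ j, (x : ℤ → Torus) j ≠ (y : ℤ → Torus) j := by
      by_contra! h
      exact hxy (Subtype.ext (funext h))
    refine ⟨_, ⟨torusChar f (Finsupp.single j 1), Algebra.subset_adjoin ⟨_, rfl⟩, rfl⟩, ?_⟩
    intro h
    have h' := AddCircle.injective_toCircle one_ne_zero (Circle.coe_injective h)
    exact hj (by simpa [torusPairing] using h')
  have := ContinuousMap.starSubalgebra_topologicalClosure_eq_top_of_separatesPoints A hsep
  rw [← hA, dense_iff_closure_eq, ← StarSubalgebra.topologicalClosure_coe, this]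
  rfl

/-- `α_f` as a continuous self-map of the group `X_f`. -/
def alphaMap (f : ℤ[X]) : C(XfGroup f, XfGroup f) where
  toFun x := ⟨shiftT x, mem_XfGroup.2 (shiftT_mem_Xf (mem_XfGroup.1 x.2))⟩
  continuous_toFun := (continuous_shiftT.comp continuous_subtype_val).subtype_mk _

lemma alphaMap_iterate_coe (f : ℤ[X]) (n : ℕ) (x : XfGroup f) :
    (((alphaMap f)^[n] x : XfGroup f) : ℤ → Torus) = shiftT^[n] (x : ℤ → Torus) := by
  induction n with
  | zero => rfl
  | succ n ih =>
    rw [Function.iterate_succ_apply', Function.iterate_succ_apply', ← ih]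
    rfl

/-- The `n`-th iterate of `α_f` as a continuous map. -/
def alphaIter (f : ℤ[X]) (n : ℕ) : C(XfGroup f, XfGroup f) :=
  ⟨(alphaMap f)^[n], (alphaMap f).continuous.iterate n⟩

lemma torusChar_comp_alphaIter (f : ℤ[X]) (n : ℕ) (q : ℤ →₀ ℤ) :
    (torusChar f q).comp (alphaIter f n) = torusChar f (laurentShift n q) := by
  ext x
  simp [torusChar_apply, alphaIter, alphaMap_iterate_coe, torusPairing_laurentShift]

section Haar

open MeasureTheory

/-- Normalized Haar measure on `X_f`. -/
def XfHaar (f : ℤ[X]) : Measure (XfGroup f) := Measure.addHaarMeasure ⊤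

instance (f : ℤ[X]) : IsProbabilityMeasure (XfHaar f) :=
  ⟨by
    rw [XfHaar, ← Measure.addHaarMeasure_self
      (K₀ := (⊤ : TopologicalSpace.PositiveCompacts (XfGroup f)))]
    rfl⟩

instance (f : ℤ[X]) : (XfHaar f).IsAddHaarMeasure := by unfold XfHaar; infer_instance

lemma integrable_XfHaar (f : ℤ[X]) (F : C(XfGroup f, ℂ)) : Integrable F (XfHaar f) :=
  F.continuous.integrable_of_hasCompactSupport (HasCompactSupport.of_compactSpace _)

lemma integral_torusChar (f : ℤ[X]) (p : ℤ →₀ ℤ) (h : ∃ x ∈ Xf f, torusPairing p x ≠ 0) :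
    ∫ x, torusChar f p x ∂(XfHaar f) = 0 := by
  obtain ⟨x, hx, hne⟩ := h
  have h1 := integral_add_left_eq_self (μ := XfHaar f) (torusChar f p) ⟨x, mem_XfGroup.2 hx⟩
  have h2 : ∀ y : XfGroup f, torusChar f p (⟨x, mem_XfGroup.2 hx⟩ + y) =
      AddCircle.toCircle (torusPairing p x) * torusChar f p y := fun y => by
    simp [torusChar_apply, torusPairing_add_right, AddCircle.toCircle_add]
  simp only [h2, integral_const_mul] at h1
  have h3 : ((AddCircle.toCircle (torusPairing p x) : Circle) : ℂ) ≠ 1 := by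
    intro h
    rw [Circle.coe_eq_one, ← AddCircle.toCircle_zero (T := 1)] at h
    exact hne (AddCircle.injective_toCircle one_ne_zero h)
  have h4 : (((AddCircle.toCircle (torusPairing p x) : Circle) : ℂ) - 1) *
    ∫ x, torusChar f p x ∂(XfHaar f) = 0 := by rw [sub_mul, one_mul, h1, sub_self]
  exact (mul_eq_zero.1 h4).resolve_left (sub_ne_zero.2 h3)

lemma norm_integral_XfHaar_le (f : ℤ[X]) (F : C(XfGroup f, ℂ)) :
    ‖∫ x, F x ∂(XfHaar f)‖ ≤ ‖F‖ := by
  have := norm_integral_le_of_norm_le_const (μ := XfHaar f) (f := F) (C := ‖F‖)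
    (Eventually.of_forall fun x => F.norm_coe_le_norm x)
  simpa using this

/-- Integration against Haar measure as a linear functional. -/
def XfIntegral (f : ℤ[X]) : C(XfGroup f, ℂ) →ₗ[ℂ] ℂ where
  toFun F := ∫ x, F x ∂(XfHaar f)
  map_add' F G := integral_add (integrable_XfHaar f F) (integrable_XfHaar f G)
  map_smul' a F := integral_const_mul a F

/-- The correlation of two continuous functions under `α_f^n`. -/
def correlation (f : ℤ[X]) (n : ℕ) : C(XfGroup f, ℂ) →ₗ[ℂ] C(XfGroup f, ℂ) →ₗ[ℂ] ℂ :=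
  LinearMap.mk₂ ℂ (fun F G => XfIntegral f (F * G.comp (alphaIter f n)) -
      XfIntegral f F * XfIntegral f G)
    (fun F F' G => by rw [add_mul, map_add, map_add]; ring)
    (fun a F G => by rw [smul_mul_assoc, map_smul, map_smul, smul_mul_assoc, smul_sub])
    (fun F G G' => by
      rw [ContinuousMap.add_comp, mul_add, map_add, map_add]; ring)
    (fun a F G => by
      rw [ContinuousMap.smul_comp, mul_smul_comm, map_smul, map_smul, mul_smul_comm, smul_sub])

lemma norm_correlation_le (f : ℤ[X]) (n : ℕ) (F G : C(XfGroup f, ℂ)) :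
    ‖correlation f n F G‖ ≤ 2 * ‖F‖ * ‖G‖ := by
  have h1 : ‖XfIntegral f (F * G.comp (alphaIter f n))‖ ≤ ‖F‖ * ‖G‖ := by
    refine (norm_integral_XfHaar_le f _).trans ((norm_mul_le _ _).trans ?_)
    gcongr
    exact (ContinuousMap.norm_le _ (norm_nonneg _)).2 fun x => G.norm_coe_le_norm _
  have h2 : ‖XfIntegral f F * XfIntegral f G‖ ≤ ‖F‖ * ‖G‖ := by
    rw [norm_mul]
    exact mul_le_mul (norm_integral_XfHaar_le f F) (norm_integral_XfHaar_le f G) (norm_nonneg _)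
      (norm_nonneg _)
  calc ‖correlation f n F G‖ ≤ _ := norm_sub_le _ _
    _ ≤ 2 * ‖F‖ * ‖G‖ := by linarith

/-- Haar measure is mixing for `α_f`. -/
lemma tendsto_correlation {f : ℤ[X]} (hm : 1 ≤ f.natDegree) (h0 : f.coeff 0 ≠ 0)
    (hirr : Irreducible (toLaurent f)) (hnc : Noncyclotomic f) (F G : C(XfGroup f, ℂ)) :
    Tendsto (fun n => correlation f n F G) atTop (𝓝 0) := by
  have hirr' := irreducible_of_toLaurent h0 hirr
  obtain ⟨θ, hθ⟩ : ∃ θ : ℂ, aeval θ f = 0 := by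
    have hdeg : (f.map (algebraMap ℤ ℂ)).degree ≠ 0 := by
      rw [degree_map_eq_of_injective (algebraMap ℤ ℂ).injective_int]
      intro h
      have := natDegree_eq_zero_iff_degree_le_zero.2 h.le
      omega
    obtain ⟨θ, hθ⟩ := IsAlgClosed.exists_root _ hdeg
    exact ⟨θ, by rwa [IsRoot, eval_map_algebraMap] at hθ⟩
  have hθ0 : θ ≠ 0 := by
    rintro rfl
    rw [← coeff_zero_eq_aeval_zero'] at hθ
    exact h0 (by simpa using hθ)
  have hchar : ∀ p q, Tendsto (fun n => correlation f n (torusChar f p) (torusChar f q)) atTop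
      (𝓝 0) := by
    intro p q
    have hval : ∀ n, correlation f n (torusChar f p) (torusChar f q) =
        XfIntegral f (torusChar f (p + laurentShift n q)) -
          XfIntegral f (torusChar f p) * XfIntegral f (torusChar f q) := fun n => by
      rw [torusChar_add, ← torusChar_comp_alphaIter]
      rfl
    by_cases hq : ∀ x ∈ Xf f, torusPairing q x = 0
    · refine tendsto_const_nhds.congr fun n => ?_
      rw [hval, torusChar_add, ← torusChar_comp_alphaIter, torusChar_eq_one f q hq]
      have h1 : XfIntegral f 1 = 1 := by simp [XfIntegral]
      rw [h1, mul_one]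
      exact (sub_eq_zero.2 (by congr 1; ext; simp)).symm
    · push Not at hq
      have hq' : laurentEval θ q ≠ 0 := fun h => by
        obtain ⟨x, hx, hne⟩ := hq
        exact hne (torusPairing_eq_zero_of_laurentEval hm hirr' hθ0 hθ h hx)
      refine tendsto_const_nhds.congr' ?_
      filter_upwards [eventually_laurentEval_ne_zero hnc hθ0 hθ (p := p) hq'] with n hn
      rw [hval]
      have h1 : XfIntegral f (torusChar f (p + laurentShift n q)) = 0 := by
        refine integral_torusChar f _ ?_
        by_contra! h
        exact hn (laurentEval_eq_zero_of_torusPairing hθ0 hθ h)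
      have h2 : XfIntegral f (torusChar f q) = 0 := integral_torusChar f _ hq
      rw [h1, h2, mul_zero, sub_zero]
  have hstep : ∀ q (F : C(XfGroup f, ℂ)),
      Tendsto (fun n => correlation f n F (torusChar f q)) atTop (𝓝 0) := by
    intro q F
    refine tendsto_zero_of_dense_span (fun n => (correlation f n).flip (torusChar f q))
      (B := 2 * ‖torusChar f q‖) (fun n x => ?_) (dense_span_torusChar f) ?_ F
    · rw [LinearMap.flip_apply, mul_right_comm]
      exact norm_correlation_le f n _ _
    · rintro - ⟨p, rfl⟩
      exact hchar p q
  refine tendsto_zero_of_dense_span (fun n => correlation f n F)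
    (B := 2 * ‖F‖) (fun n x => norm_correlation_le f n _ _) (dense_span_torusChar f) ?_ G
  rintro - ⟨q, rfl⟩
  exact hstep q F

/-- Every nonempty open subset of `X_f` supports a continuous function with nonzero integral. -/
lemma exists_bump {f : ℤ[X]} {U : Set (XfGroup f)} (hU : IsOpen U) (hne : U.Nonempty) :
    ∃ F : C(XfGroup f, ℂ), (∀ x, F x ≠ 0 → x ∈ U) ∧ XfIntegral f F ≠ 0 := by
  obtain ⟨a, ha⟩ := hne
  obtain ⟨g, hg0, hg1, hg⟩ := exists_continuous_zero_one_of_isClosed hU.isClosed_compl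
    (isClosed_singleton (x := a)) (Set.disjoint_singleton_right.2 fun h => h ha)
  refine ⟨(⟨_, Complex.continuous_ofReal⟩ : C(ℝ, ℂ)).comp g, fun x hx => ?_, ?_⟩
  · by_contra h
    exact hx (by simp [hg0 h])
  · have h1 : 0 < ∫ x, g x ∂(XfHaar f) := by
      refine g.continuous.integral_pos_of_hasCompactSupport_nonneg_nonzero
        (HasCompactSupport.of_compactSpace _) (fun x => (hg x).1) (x := a) ?_
      rw [hg1 rfl]
      exact one_ne_zero
    have h2 : XfIntegral f ((⟨_, Complex.continuous_ofReal⟩ : C(ℝ, ℂ)).comp g) =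
        ((∫ x, g x ∂(XfHaar f) : ℝ) : ℂ) := integral_ofReal
    rw [h2]
    exact_mod_cast h1.ne'

end Haar

/-- `α_f` is topologically mixing. -/
lemma topologically_mixing {f : ℤ[X]} (hm : 1 ≤ f.natDegree) (h0 : f.coeff 0 ≠ 0)
    (hirr : Irreducible (toLaurent f)) (hnc : Noncyclotomic f) {U V : Set (XfGroup f)}
    (hU : IsOpen U) (hUne : U.Nonempty) (hV : IsOpen V) (hVne : V.Nonempty) :
    ∀ᶠ n : ℕ in atTop, ∃ x ∈ U, (alphaMap f)^[n] x ∈ V := by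
  obtain ⟨F, hF, hF0⟩ := exists_bump hU hUne
  obtain ⟨G, hG, hG0⟩ := exists_bump hV hVne
  have h := tendsto_correlation hm h0 hirr hnc F G
  have hne : XfIntegral f F * XfIntegral f G ≠ 0 := mul_ne_zero hF0 hG0
  filter_upwards [h.eventually_ne (neg_ne_zero.2 hne).symm] with n hn
  by_contra! hcon
  refine hn ?_
  have hz : F * G.comp (alphaIter f n) = 0 := by
    ext x
    by_cases hx : F x = 0
    · simp [hx]
    · have : G ((alphaMap f)^[n] x) = 0 := by
        by_contra hy
        exact hcon x (hF x hx) (hG _ hy)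
      simp [alphaIter, this]
  change XfIntegral f (F * G.comp (alphaIter f n)) - _ = _
  rw [hz, map_zero, zero_sub]

/-- A two-sided solution of the recurrence given by `f` is determined by `deg f` consecutive
values. -/
lemma eq_zero_of_fsR_eq_zero {f : ℤ[X]} (hf : f ≠ 0) (h0 : f.coeff 0 ≠ 0) {w : ℤ → ℝ}
    (hw : ∀ n, fsR f w n = 0) (hinit : ∀ i : ℕ, i < f.natDegree → w i = 0) (n : ℤ) : w n = 0 := by
  have hfw : ∀ n : ℕ, ∀ i : ℕ, i < n + f.natDegree → w i = 0 := by
    intro n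
    induction n with
    | zero => simpa using hinit
    | succ n ih =>
      intro i hi
      rcases Nat.lt_or_ge i (n + f.natDegree) with h | h
      · exact ih i h
      · have hi' : i = n + f.natDegree := by omega
        subst hi'
        have := hw n
        rw [fsR, Finset.sum_range_succ, Finset.sum_eq_zero, zero_add] at this
        · have hl : (f.coeff f.natDegree : ℝ) ≠ 0 := by
            rw [coeff_natDegree]
            exact_mod_cast leadingCoeff_ne_zero.2 hf
          exact (mul_eq_zero.1 this).resolve_left hl
        · intro k hk
          have := ih (n + k) (by have := Finset.mem_range.1 hk; omega)
          push_cast at this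
          rw [this, mul_zero]
  have hbw : ∀ n : ℕ, ∀ i : ℤ, -(n : ℤ) ≤ i → w i = 0 := by
    intro n
    induction n with
    | zero =>
      intro i hi
      have := hfw (i.toNat + 1) i.toNat (by omega)
      rwa [Int.toNat_of_nonneg (by omega)] at this
    | succ n ih =>
      intro i hi
      rcases lt_or_ge i (-(n : ℤ)) with h | h
      · have := hw i
        rw [fsR, Finset.sum_range_succ', Finset.sum_eq_zero, zero_add] at this
        · have hl : (f.coeff 0 : ℝ) ≠ 0 := by exact_mod_cast h0
          simpa [hl] using this
        · intro k _
          rw [ih (i + (k + 1 : ℕ)) (by push_cast at hi ⊢; omega), mul_zero]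
      · exact ih i h
  exact hbw n.natAbs n (by omega)

lemma finiteDimensional_centralSubmodule {f : ℤ[X]} (hf : f ≠ 0) (h0 : f.coeff 0 ≠ 0) :
    FiniteDimensional ℝ (centralSubmodule f) := by
  let ev : centralSubmodule f →ₗ[ℝ] (Fin f.natDegree → ℝ) :=
    { toFun := fun w i => (w : ℤ →ᵇ ℝ) (i : ℕ)
      map_add' := fun _ _ => rfl
      map_smul' := fun _ _ => rfl }
  refine FiniteDimensional.of_injective ev (LinearMap.ker_eq_bot.1 ((LinearMap.ker_eq_bot').2 fun w hw => ?_))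
  refine Subtype.ext (BoundedContinuousFunction.ext fun n => ?_)
  exact eq_zero_of_fsR_eq_zero hf h0 w.2 (fun i hi => congrFun hw ⟨i, hi⟩) n

lemma norm_translB (k : ℤ) (w : ℤ →ᵇ ℝ) : ‖translB k w‖ = ‖w‖ := by
  refine le_antisymm ((norm_le (norm_nonneg _)).2 fun n => w.norm_coe_le_norm _)
    ((norm_le (norm_nonneg _)).2 fun n => ?_)
  have := (translB k w).norm_coe_le_norm (n - k)
  simpa using this

/-- Translation by `k` on `W_f^∘`. -/
def translCLM (f : ℤ[X]) (k : ℤ) : centralSubmodule f →L[ℝ] centralSubmodule f :=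
  LinearMap.mkContinuous
    { toFun := fun w => ⟨translB k w, translB_mem_centralSubmodule k w.2⟩
      map_add' := fun _ _ => rfl
      map_smul' := fun _ _ => rfl } 1 fun w => by
        rw [one_mul]
        exact (norm_translB k w).le

lemma norm_translCLM_le (f : ℤ[X]) (k : ℤ) : ‖translCLM f k‖ ≤ 1 :=
  LinearMap.mkContinuous_norm_le _ zero_le_one _

/-- A sequence of contractions of a finite-dimensional space has uniformly close members at
arbitrarily large distances in the index. -/
lemma exists_near_of_contractions {E : Type*} [NormedAddCommGroup E] [NormedSpace ℝ E]
    [FiniteDimensional ℝ E] (β : ℕ → E →L[ℝ] E) (hβ : ∀ n, ‖β n‖ ≤ 1) {ε : ℝ} (hε : 0 < ε) (N : ℕ) :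
    ∃ n k : ℕ, N + k ≤ n ∧ ∀ w, ‖β n w - β k w‖ ≤ ε * ‖w‖ := by
  have : ProperSpace (E →L[ℝ] E) := FiniteDimensional.proper ℝ _
  obtain ⟨L, -, φ, hφ, hL⟩ := (isCompact_closedBall (0 : E →L[ℝ] E) 1).tendsto_subseq
    (x := β) fun n => by simpa using hβ n
  obtain ⟨M, hM⟩ := Metric.cauchySeq_iff.1 hL.cauchySeq ε hε
  refine ⟨φ (M + N), φ M, hφ.add_le_nat N M |>.trans (by rw [add_comm]), fun w => ?_⟩
  have h2 := hM (M + N) (by omega) M le_rfl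
  rw [dist_eq_norm] at h2
  exact ((β (φ (M + N)) - β (φ M)).le_opNorm w).trans
    (mul_le_mul_of_nonneg_right h2.le (norm_nonneg _))

/-- The shift on the finite-dimensional space `W_f^∘` is uniformly recurrent. -/
lemma exists_translB_near_id {f : ℤ[X]} (hf : f ≠ 0) (h0 : f.coeff 0 ≠ 0) {ε : ℝ} (hε : 0 < ε)
    (N : ℕ) : ∃ n ≥ N, ∀ w ∈ centralSubmodule f, ‖translB (n : ℤ) w - w‖ ≤ ε * ‖w‖ := by
  have := finiteDimensional_centralSubmodule hf h0
  obtain ⟨n, k, hnk, h⟩ := exists_near_of_contractions (fun n : ℕ => translCLM f n)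
    (fun n => norm_translCLM_le f n) hε N
  refine ⟨n - k, by omega, fun w hw => ?_⟩
  have h1 : ‖translB n w - translB k w‖ ≤ ε * ‖w‖ := h ⟨w, hw⟩
  have h3 : translB n w - translB k w = translB k (translB ((n - k : ℕ) : ℤ) w - w) := by
    ext j
    have e : j + (k : ℤ) + ((n - k : ℕ) : ℤ) = j + n := by omega
    change w (j + n) - w (j + k) = w (j + k + ((n - k : ℕ) : ℤ)) - w (j + k)
    rw [e]
  rwa [h3, norm_translB] at h1

/-- There is a point of `X_f` whose orbit is dense along times at which the shift on `W_f^∘` is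
almost the identity. -/
lemma exists_dense_orbit {f : ℤ[X]} (hm : 1 ≤ f.natDegree) (h0 : f.coeff 0 ≠ 0)
    (hirr : Irreducible (toLaurent f)) (hnc : Noncyclotomic f) :
    ∃ x0 : XfGroup f, ∀ U : Set (XfGroup f), IsOpen U → U.Nonempty → ∀ ε > 0,
      ∃ n : ℕ, (alphaMap f)^[n] x0 ∈ U ∧
        ∀ w ∈ centralSubmodule f, ‖translB (n : ℤ) w - w‖ ≤ ε * ‖w‖ := by
  have hf : f ≠ 0 := by rintro rfl; simp at h0
  have : SecondCountableTopology (XfGroup f) :=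
    TopologicalSpace.Subtype.secondCountableTopology (XfGroup f : Set (ℤ → Torus))
  let R : ℕ → Set ℕ := fun j => {n | ∀ w ∈ centralSubmodule f,
    ‖translB (n : ℤ) w - w‖ ≤ 1 / ((j : ℝ) + 1) * ‖w‖}
  let B := TopologicalSpace.countableBasis (XfGroup f)
  let O : B × ℕ → Set (XfGroup f) := fun q => ⋃ n ∈ R q.2, (alphaMap f)^[n] ⁻¹' (q.1 : Set _)
  have hopen : ∀ q, IsOpen (O q) := fun q => isOpen_biUnion fun n _ =>
    (TopologicalSpace.isOpen_of_mem_countableBasis q.1.2).preimage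
      ((alphaMap f).continuous.iterate n)
  have hdense : ∀ q, Dense (O q) := by
    intro q
    rw [dense_iff_inter_open]
    intro U hU hUne
    obtain ⟨N, hN⟩ := eventually_atTop.1 (topologically_mixing hm h0 hirr hnc hU hUne
      (TopologicalSpace.isOpen_of_mem_countableBasis q.1.2)
      (TopologicalSpace.nonempty_of_mem_countableBasis q.1.2))
    obtain ⟨n, hn, hR⟩ := exists_translB_near_id hf h0 (ε := 1 / ((q.2 : ℝ) + 1)) (by positivity) N
    obtain ⟨x, hx, hx'⟩ := hN n hn
    exact ⟨x, hx, Set.mem_biUnion (show n ∈ R q.2 from hR) hx'⟩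
  have : Countable B := (TopologicalSpace.countable_countableBasis _).to_subtype
  obtain ⟨x0, hx0⟩ := (dense_iInter_of_isOpen hopen hdense).nonempty
  refine ⟨x0, fun U hU ⟨a, ha⟩ ε hε => ?_⟩
  obtain ⟨V, hV, -, hVU⟩ :=
    (TopologicalSpace.isBasis_countableBasis (XfGroup f)).exists_subset_of_mem_open ha hU
  obtain ⟨j, hj⟩ := exists_nat_one_div_lt hε
  obtain ⟨n, hn, hnx⟩ := Set.mem_iUnion₂.1 (Set.mem_iInter.1 hx0 (⟨V, hV⟩, j))
  exact ⟨n, hVU hnx, fun w hw => (hn w hw).trans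
    (mul_le_mul_of_nonneg_right hj.le (norm_nonneg _))⟩

lemma fsT_coe (f : ℤ[X]) (y : ℤ → ℝ) (n : ℤ) :
    fsT f (fun k => (y k : Torus)) n = ((fsR f y n : ℝ) : Torus) := by
  simp [fsT, fsR, ← zsmul_eq_mul]

/-- The standard lift of a point of the torus to the unit interval. -/
def torusLift (x : ℤ → Torus) : ℤ → ℝ := fun n => AddCircle.equivIco 1 0 (x n)

lemma torusLift_mem_Ico (x : ℤ → Torus) (n : ℤ) : torusLift x n ∈ Set.Ico (0 : ℝ) 1 := by
  have h := (AddCircle.equivIco (1 : ℝ) 0 (x n)).2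
  exact ⟨h.1, h.2.trans_eq (zero_add 1)⟩

lemma coe_torusLift (x : ℤ → Torus) (n : ℤ) : ((torusLift x n : ℝ) : Torus) = x n :=
  (AddCircle.equivIco 1 0).symm_apply_apply (x n)

lemma torusLift_mem_YfSet {f : ℤ[X]} {x : ℤ → Torus} (hx : x ∈ Xf f) : torusLift x ∈ YfSet f := by
  refine ⟨⟨⟨1, fun n => ?_⟩, fun n => ?_⟩, torusLift_mem_Ico x⟩
  · rw [abs_of_nonneg (torusLift_mem_Ico x n).1]
    exact (torusLift_mem_Ico x n).2.le
  · have h := fsT_coe f (torusLift x) n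
    simp only [coe_torusLift] at h
    rw [hx n, eq_comm, AddCircle.coe_eq_zero_iff] at h
    obtain ⟨z, hz⟩ := h
    exact ⟨z, by rw [← hz]; simp⟩

/-- Coordinatewise reduction mod one of bounded sequences. -/
def rhoB (w : ℤ →ᵇ ℝ) : ℤ → Torus := fun n => (w n : Torus)

lemma continuous_rhoB : Continuous rhoB :=
  continuous_pi fun n => (AddCircle.continuous_mk' 1).comp (continuous_eval_const n)

lemma shiftT_iterate_apply (n : ℕ) (x : ℤ → Torus) (k : ℤ) : shiftT^[n] x k = x (k + n) := by
  have h : shiftT^[n] x = (shiftEnd ^ n) x := (Module.End.pow_apply shiftEnd n x).symm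
  rw [h, shiftEnd_pow_apply]

lemma zetaMap_eq {f : ℤ[X]} (hf : f ≠ 0) {wp wm : ℤ → ℝ} (hwp : IsWplus f wp)
    (hwm : IsWminus f wm) {w0 : ℤ →ᵇ ℝ} (hw0 : ∀ n, w0 n = wm n - wp n) {y : ℤ → ℝ} (hy : Bdd y)
    {v : ℤ → ℤ} (hv : ∀ n, (v n : ℝ) = fsR f y n) (w : ℤ →ᵇ ℝ) :
    zetaMap wp wm (v, w) = (fun n => (y n : Torus)) + rhoB (centralDefect f w0 y + w) := by
  funext k
  simp [zetaMap, xiStar_eq hf hwp hwm hw0 hy hv, rhoB, add_assoc]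

lemma zetaMap_mem_Xf {f : ℤ[X]} (hf : f ≠ 0) {wp wm : ℤ → ℝ} (hwp : IsWplus f wp)
    (hwm : IsWminus f wm) {w0 : ℤ →ᵇ ℝ} (hw0 : ∀ n, w0 n = wm n - wp n)
    {p : (ℤ → ℤ) × (ℤ →ᵇ ℝ)} (hp : p ∈ (ZbarZ f) ×ˢ (WfCircB f)) : zetaMap wp wm p ∈ Xf f := by
  obtain ⟨y, hy, hv⟩ := mem_ZbarZ_iff.1 hp.1
  have hw0' := diff_mem_centralSubmodule hwp hwm hw0
  have hw' : centralDefect f w0 y + p.2 ∈ centralSubmodule f :=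
    Submodule.add_mem _ (centralDefect_mem hw0' y) hp.2
  intro n
  have hz := zetaMap_eq hf hwp hwm hw0 (bdd_of_mem_closure_YfSet hy) hv p.2
  have hz' : zetaMap wp wm p =
      fun n => (((y + (centralDefect f w0 y + p.2 : ℤ →ᵇ ℝ)) n : ℝ) : Torus) := by
    rw [show p = (p.1, p.2) from rfl, hz]
    funext k
    simp [rhoB]
  rw [hz', fsT_coe, fsR_add, Pi.add_apply, hw' n, add_zero, ← hv n, AddCircle.coe_eq_zero_iff]
  exact ⟨p.1 n, by simp⟩

/-- The image under `ζ` of a compact invariant cover is all of `X_f`. -/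
lemma zetaMap_image_eq {f : ℤ[X]} (hm : 1 ≤ f.natDegree) (h0 : f.coeff 0 ≠ 0)
    (hirr : Irreducible (toLaurent f)) (hnc : Noncyclotomic f)
    {wp wm : ℤ → ℝ} (hwp : IsWplus f wp) (hwm : IsWminus f wm)
    {w0 : ℤ →ᵇ ℝ} (hw0 : ∀ n, w0 n = wm n - wp n) {C : Set ((ℤ → ℤ) × (ℤ →ᵇ ℝ))}
    (hC : IsCompact C) (hCsub : C ⊆ (ZbarZ f) ×ˢ (WfCircB f)) (hCinv : tauMap w0 '' C = C)
    (hCfst : Prod.fst '' C = ZbarZ f) : zetaMap wp wm '' C = Xf f := by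
  have hf : f ≠ 0 := by rintro rfl; simp at h0
  have hclosed : IsClosed (zetaMap wp wm '' C) :=
    (hC.image_of_continuousOn (continuousOn_zetaMap hf hwp hwm fun p hp => (hCsub hp).1)).isClosed
  have hinv : ∀ n : ℕ, ∀ x ∈ zetaMap wp wm '' C, shiftT^[n] x ∈ zetaMap wp wm '' C := by
    intro n
    induction n with
    | zero => exact fun x hx => hx
    | succ n ih =>
      intro x hx
      rw [Function.iterate_succ_apply]
      refine ih _ ?_
      obtain ⟨p, hp, rfl⟩ := hx
      rw [← zetaMap_tauMap hf hwp hwm hw0 (bdd_of_mem_ZbarZ (hCsub hp).1)]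
      exact Set.mem_image_of_mem _ (hCinv ▸ Set.mem_image_of_mem _ hp)
  have hsub : zetaMap wp wm '' C ⊆ Xf f := by
    rintro - ⟨p, hp, rfl⟩
    exact zetaMap_mem_Xf hf hwp hwm hw0 (hCsub hp)
  refine hsub.antisymm ?_
  obtain ⟨x0, hx0⟩ := exists_dense_orbit hm h0 hirr hnc
  have hy := torusLift_mem_YfSet (mem_XfGroup.1 x0.2)
  choose v hv using hy.1.2
  have hvZ : v ∈ ZbarZ f := mem_ZbarZ_iff.2 ⟨_, subset_closure hy, fun n => (hv n).symm⟩
  rw [← hCfst] at hvZ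
  obtain ⟨⟨v', w⟩, hp, hvv : v' = v⟩ := hvZ
  subst hvv
  set w' := centralDefect f w0 (torusLift x0) + w with hw'
  have hw'mem : w' ∈ centralSubmodule f :=
    Submodule.add_mem _ (centralDefect_mem (diff_mem_centralSubmodule hwp hwm hw0) _) (hCsub hp).2
  have hbase : (x0 : ℤ → Torus) + rhoB w' ∈ zetaMap wp wm '' C := by
    refine ⟨_, hp, ?_⟩
    rw [zetaMap_eq hf hwp hwm hw0 hy.1.1 fun n => (hv n).symm]
    simp only [coe_torusLift]
    rfl
  have hall : ∀ x : XfGroup f, (x : ℤ → Torus) + rhoB w' ∈ zetaMap wp wm '' C := by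
    intro x
    rw [← hclosed.closure_eq, mem_closure_iff_nhds]
    intro O hO
    have hcont : Continuous fun q : XfGroup f × (ℤ →ᵇ ℝ) => (q.1 : ℤ → Torus) + rhoB q.2 :=
      (continuous_subtype_val.comp continuous_fst).add (continuous_rhoB.comp continuous_snd)
    have hpre := hcont.continuousAt (x := (x, w')) hO
    rw [mem_map, nhds_prod_eq, mem_prod_iff] at hpre
    obtain ⟨U, hU, W, hW, hUW⟩ := hpre
    obtain ⟨U', hU'U, hU', hxU'⟩ := mem_nhds_iff.1 hU
    obtain ⟨ε, hε, hεW⟩ := Metric.mem_nhds_iff.1 hW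
    obtain ⟨n, hn, hnw⟩ := hx0 U' hU' ⟨x, hxU'⟩ (ε / (‖w'‖ + 1)) (by positivity)
    refine ⟨shiftT^[n] ((x0 : ℤ → Torus) + rhoB w'), ?_, hinv n _ hbase⟩
    have heq : shiftT^[n] ((x0 : ℤ → Torus) + rhoB w') =
        (((alphaMap f)^[n] x0 : XfGroup f) : ℤ → Torus) + rhoB (translB n w') := by
      rw [alphaMap_iterate_coe]
      funext k
      simp [shiftT_iterate_apply, rhoB]
    rw [heq]
    refine hUW (show (((alphaMap f)^[n] x0, translB n w') : XfGroup f × (ℤ →ᵇ ℝ)) ∈ U ×ˢ W from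
      ⟨hU'U hn, hεW ?_⟩)
    rw [Metric.mem_ball, dist_eq_norm]
    refine (hnw w' hw'mem).trans_lt ?_
    rw [div_mul_eq_mul_div, div_lt_iff₀ (by positivity)]
    nlinarith [norm_nonneg w']
  intro x hx
  have hrho : rhoB w' ∈ XfGroup f := by
    have h1 := mem_XfGroup.2 (hsub (hall 0))
    simpa using h1
  have h2 := hall (⟨x, mem_XfGroup.2 hx⟩ - ⟨_, hrho⟩)
  simpa using h2

/-- On a window where `f(σ̄) d = 0`, each coordinate of `d` is a fixed linear function of the first
`deg f` coordinates. -/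
lemma exists_linear_of_fsR_eq_zero {f : ℤ[X]} (hf : f ≠ 0) (N k : ℕ) (hk : k < N) :
    ∃ φ : (Fin f.natDegree → ℝ) →ₗ[ℝ] ℝ, ∀ d : ℤ → ℝ,
      (∀ n : ℕ, n + f.natDegree < N → fsR f d n = 0) → d k = φ fun i => d (i : ℕ) := by
  induction k using Nat.strong_induction_on with
  | _ k ih =>
    rcases lt_or_ge k f.natDegree with h | h
    · exact ⟨LinearMap.proj ⟨k, h⟩, fun d _ => rfl⟩
    · obtain ⟨n, rfl⟩ := Nat.exists_eq_add_of_le' h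
      have hlc : (f.coeff f.natDegree : ℝ) ≠ 0 := by exact_mod_cast leadingCoeff_ne_zero.2 hf
      choose φ hφ using fun j : Fin f.natDegree =>
        ih (n + j) (by have := j.2; omega) (by have := j.2; omega)
      refine ⟨-(f.coeff f.natDegree : ℝ)⁻¹ • ∑ j : Fin f.natDegree, (f.coeff j : ℝ) • φ j,
        fun d hd => ?_⟩
      have h1 := hd n hk
      rw [fsR, Finset.sum_range_succ, Finset.sum_range] at h1
      have h2 : ∀ j : Fin f.natDegree, d ((n : ℤ) + ((j : ℕ) : ℤ)) = φ j fun i => d (i : ℕ) := by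
        intro j
        rw [← hφ j d hd]
        push_cast
        rfl
      simp only [h2] at h1
      simp only [LinearMap.smul_apply, LinearMap.sum_apply, smul_eq_mul]
      push_cast
      field_simp
      linarith

/-- The number of sign patterns of an affine translate of the space of solutions of a linear
recurrence on a window grows polynomially in the length of the window. -/
lemma card_signPatterns_le {f : ℤ[X]} (hf : f ≠ 0) (N : ℕ) (b : Fin N → ℝ)
    (𝒜 : Finset (Finset (Fin N)))
    (h : ∀ A ∈ 𝒜, ∃ d : ℤ → ℝ, (∀ n : ℕ, n + f.natDegree < N → fsR f d n = 0) ∧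
      ∀ k : Fin N, k ∈ A ↔ 0 ≤ d (k : ℕ) + b k) :
    𝒜.card ≤ (f.natDegree + 1) * (N + 1) ^ f.natDegree := by
  have hvc : 𝒜.vcDim ≤ f.natDegree := by
    refine Finset.sup_le fun S hS => ?_
    rw [Finset.mem_shatterer] at hS
    by_contra! hcard
    choose φ hφ using fun k : Fin N => exists_linear_of_fsR_eq_zero hf N k k.2
    have hdep : ¬ LinearIndependent ℝ fun k : S => φ k := by
      intro hli
      have h1 := hli.fintype_card_le_finrank
      rw [Module.finrank_linearMap, Module.finrank_fin_fun, Module.finrank_self,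
        Fintype.card_coe] at h1
      omega
    rw [Fintype.not_linearIndependent_iff] at hdep
    obtain ⟨c, hc, i, hi⟩ := hdep
    have hsum : ∀ d : ℤ → ℝ, (∀ n : ℕ, n + f.natDegree < N → fsR f d n = 0) →
        ∑ k : S, c k * d ((k : Fin N) : ℕ) = 0 := by
      intro d hd
      have := congrArg (fun ψ : (Fin f.natDegree → ℝ) →ₗ[ℝ] ℝ => ψ fun i => d (i : ℕ)) hc
      simpa [hφ _ d hd] using this
    obtain ⟨A, hA, hAS⟩ := hS (t := S.filter fun k => ∃ hk : k ∈ S, 0 < c ⟨k, hk⟩)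
      (Finset.filter_subset _ _)
    obtain ⟨A', hA', hAS'⟩ := hS (t := S.filter fun k => ∃ hk : k ∈ S, c ⟨k, hk⟩ < 0)
      (Finset.filter_subset _ _)
    obtain ⟨d, hd, hdA⟩ := h A hA
    obtain ⟨d', hd', hdA'⟩ := h A' hA'
    have e1 : ∀ k : S, 0 ≤ d ((k : Fin N) : ℕ) + b k ↔ 0 < c k := by
      rintro ⟨k, hk⟩
      rw [← hdA k]
      have := Finset.ext_iff.1 hAS k
      simpa [hk] using this
    have e2 : ∀ k : S, 0 ≤ d' ((k : Fin N) : ℕ) + b k ↔ c k < 0 := by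
      rintro ⟨k, hk⟩
      rw [← hdA' k]
      have := Finset.ext_iff.1 hAS' k
      simpa [hk] using this
    have key : ∀ k : S, c k * (d' ((k : Fin N) : ℕ) + b k) ≤ c k * (d ((k : Fin N) : ℕ) + b k) := by
      intro k
      have h1 := e1 k
      have h2 := e2 k
      rcases lt_trichotomy (c k) 0 with hk | hk | hk
      · have a1 := h2.2 hk
        have a2 := not_le.1 fun hh => absurd (h1.1 hh) (by linarith)
        nlinarith
      · simp [hk]
      · have a1 := h1.2 hk
        have a2 := not_le.1 fun hh => absurd (h2.1 hh) (by linarith)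
        nlinarith
    have key' : c i * (d' ((i : Fin N) : ℕ) + b i) < c i * (d ((i : Fin N) : ℕ) + b i) := by
      have h1 := e1 i
      have h2 := e2 i
      rcases lt_or_gt_of_ne hi with hk | hk
      · have a1 := h2.2 hk
        have a2 := not_le.1 fun hh => absurd (h1.1 hh) (by linarith)
        nlinarith
      · have a1 := h1.2 hk
        have a2 := not_le.1 fun hh => absurd (h2.1 hh) (by linarith)
        nlinarith
    have := Finset.sum_lt_sum (fun k _ => key k) ⟨i, Finset.mem_univ i, key'⟩
    simp only [mul_add, Finset.sum_add_distrib, hsum d hd, hsum d' hd'] at this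
    exact lt_irrefl _ this
  refine (Finset.card_le_card_shatterer 𝒜).trans
    (Finset.card_shatterer_le_sum_vcDim.trans ?_)
  refine (Finset.sum_le_sum_of_subset (Finset.Iic_subset_Iic.2 hvc)).trans ?_
  refine (Finset.sum_le_card_nsmul _ _ ((N + 1) ^ f.natDegree) fun k hk => ?_).trans ?_
  · rw [Fintype.card_fin]
    exact (Nat.choose_le_pow N k).trans ((Nat.pow_le_pow_left (by omega) k).trans
      (Nat.pow_le_pow_right (by omega) (Finset.mem_Iic.1 hk)))
  · simp

/-- The carry in an addition of a small real number is determined by a sign. -/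
lemma carry_eq {y d : ℝ} {z : ℤ} (hy : y ∈ Set.Ico (0 : ℝ) 1) (hd : |d| < 1 / 2)
    (h : y + d + z ∈ Set.Ico (0 : ℝ) 1) :
    z = if y < 1 / 2 then (if 0 ≤ d + y then 0 else 1) else (if 0 ≤ d + (y - 1) then -1 else 0) := by
  obtain ⟨h1, h2⟩ := h
  obtain ⟨h3, h4⟩ := hy
  obtain ⟨h5, h6⟩ := abs_lt.1 hd
  split_ifs
  · have a : (-1 : ℝ) < z := by linarith
    have b : (z : ℝ) < 1 := by linarith
    have a' : -1 < z := by exact_mod_cast a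
    have b' : z < 1 := by exact_mod_cast b
    omega
  · have a : (0 : ℝ) < z := by linarith
    have b : (z : ℝ) < 2 := by linarith
    have a' : 0 < z := by exact_mod_cast a
    have b' : z < 2 := by exact_mod_cast b
    omega
  · have a : (-2 : ℝ) < z := by linarith
    have b : (z : ℝ) < 0 := by linarith
    have a' : -2 < z := by exact_mod_cast a
    have b' : z < 0 := by exact_mod_cast b
    omega
  · have a : (-1 : ℝ) < z := by linarith
    have b : (z : ℝ) < 1 := by linarith
    have a' : -1 < z := by exact_mod_cast a
    have b' : z < 1 := by exact_mod_cast b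
    omega

/-- The blocks of `f(σ̄) y`, `y ∈ Y_f`, for which `y` reduces to a small Bowen ball mod one, grow
polynomially in number. -/
lemma card_blocks_near_le {f : ℤ[X]} (hf : f ≠ 0) {ε : ℝ} (hε4 : ε ≤ 1 / 4)
    (hε : coeffNorm f * (2 * ε) < 1) (M : ℕ) (c : ℤ → Torus) (F : Finset (Fin M → ℤ))
    (h : ∀ β ∈ F, ∃ y ∈ YfSet f, (∀ i : Fin M, (β i : ℝ) = fsR f y (i : ℕ)) ∧
      ∀ k : ℕ, k < M + f.natDegree → ‖(y k : Torus) - c k‖ < ε) :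
    F.card ≤ (f.natDegree + 1) * (M + f.natDegree + 1) ^ f.natDegree := by
  classical
  rcases F.eq_empty_or_nonempty with rfl | ⟨β₀, hβ₀⟩
  · simp
  choose! y hyY hyβ hyc using h
  set r : ℤ → ℝ := y β₀ with hr
  set z : (Fin M → ℤ) → ℤ → ℤ := fun β k => round (y β k - r k) with hz
  set d : (Fin M → ℤ) → ℤ → ℝ := fun β k => y β k - r k - z β k with hd
  set b : ℤ → ℝ := fun k => if r k < 1 / 2 then r k else r k - 1 with hb
  have hdsmall : ∀ β ∈ F, ∀ k : ℕ, k < M + f.natDegree → |d β k| < 2 * ε := by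
    intro β hβ k hk
    have h1 := hyc β hβ k hk
    have h2 := hyc β₀ hβ₀ k hk
    have h3 : ‖((y β k - r k : ℝ) : Torus)‖ < 2 * ε := by
      have e : ((y β k - r k : ℝ) : Torus) = ((y β k : ℝ) - c k) - ((r k : ℝ) - c k) := by
        rw [AddCircle.coe_sub]; abel
      rw [e]
      exact (norm_sub_le _ _).trans_lt (by linarith)
    rw [UnitAddCircle.norm_eq] at h3
    exact h3
  have hfd : ∀ β ∈ F, ∀ n : ℕ, n + f.natDegree < M + f.natDegree → fsR f (d β) n = 0 := by
    intro β hβ n hn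
    have h1 : |fsR f (d β) n| < 1 := by
      refine (abs_fsR_le f (d β) (2 * ε) n fun k hk => ?_).trans_lt hε
      rw [Finset.mem_range] at hk
      exact_mod_cast (hdsmall β hβ (n + k) (by omega)).le
    have h2 : ∃ q : ℤ, fsR f (d β) n = q := by
      obtain ⟨q1, hq1⟩ := (hyY β hβ).1.2 n
      obtain ⟨q2, hq2⟩ := (hyY β₀ hβ₀).1.2 n
      refine ⟨q1 - q2 - ∑ k ∈ Finset.range (f.natDegree + 1), f.coeff k * z β (n + k), ?_⟩
      push_cast
      rw [← hq1, ← hq2]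
      simp only [fsR, ← Finset.sum_sub_distrib, hd, hr]
      exact Finset.sum_congr rfl fun _ _ => by ring
    obtain ⟨q, hq⟩ := h2
    rw [hq] at h1 ⊢
    have : |q| < 1 := by exact_mod_cast h1
    rw [Int.abs_lt_one_iff.1 this, Int.cast_zero]
  set P : (Fin M → ℤ) → Finset (Fin (M + f.natDegree)) := fun β =>
    Finset.univ.filter fun k => 0 ≤ d β (k : ℕ) + b (k : ℕ) with hP
  have hcarry : ∀ β ∈ F, ∀ k : Fin (M + f.natDegree), z β (k : ℕ) =
      if r (k : ℕ) < 1 / 2 then (if k ∈ P β then 0 else 1) else (if k ∈ P β then -1 else 0) := by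
    intro β hβ k
    have h1 : r (k : ℕ) + d β (k : ℕ) + z β (k : ℕ) = y β (k : ℕ) := by simp only [hd]; ring
    have h2 := carry_eq (y := r (k : ℕ)) (d := d β (k : ℕ)) (z := z β (k : ℕ))
      ((hyY β₀ hβ₀).2 _) ((hdsmall β hβ k k.2).trans_le (by linarith))
      (by rw [h1]; exact (hyY β hβ).2 _)
    rw [h2]
    by_cases hlt : r (k : ℕ) < 1 / 2 <;>
      simp only [hP, hb, hlt, Finset.mem_filter, Finset.mem_univ, true_and, if_true, if_false]
  have hinj : Set.InjOn P F := by
    intro β hβ β' hβ' heq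
    funext i
    have h1 : ∀ γ ∈ F, (γ i : ℝ) = fsR f r (i : ℕ) + fsR f (fun k => (z γ k : ℝ)) (i : ℕ) := by
      intro γ hγ
      have h0 := hfd γ hγ i (by have := i.2; omega)
      rw [hyβ γ hγ i]
      have e : fsR f (d γ) (i : ℕ) = fsR f (y γ) (i : ℕ) - fsR f r (i : ℕ)
          - fsR f (fun k => (z γ k : ℝ)) (i : ℕ) := by
        simp only [fsR, ← Finset.sum_sub_distrib, hd]
        exact Finset.sum_congr rfl fun _ _ => by ring
      rw [h0] at e
      linarith
    have h2 : fsR f (fun k => (z β k : ℝ)) (i : ℕ) = fsR f (fun k => (z β' k : ℝ)) (i : ℕ) := by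
      simp only [fsR]
      refine Finset.sum_congr rfl fun k hk => ?_
      rw [Finset.mem_range] at hk
      have hlt : (i : ℕ) + k < M + f.natDegree := by have := i.2; omega
      have a1 := hcarry β hβ ⟨i + k, hlt⟩
      have a2 := hcarry β' hβ' ⟨i + k, hlt⟩
      rw [heq, ← a2] at a1
      push_cast at a1
      rw [a1]
    have h3 := h1 β hβ
    rw [h2, ← h1 β' hβ'] at h3
    exact_mod_cast h3
  rw [← Finset.card_image_of_injOn hinj]
  refine card_signPatterns_le hf (M + f.natDegree) (fun k => b (k : ℕ)) _ fun A hA => ?_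
  obtain ⟨β, hβ, rfl⟩ := Finset.mem_image.1 hA
  exact ⟨d β, hfd β hβ, fun k => by simp [hP]⟩

lemma shiftIterR_mem_YfSet {f : ℤ[X]} {y : ℤ → ℝ} (k : ℤ) (hy : y ∈ YfSet f) :
    shiftIterR k y ∈ YfSet f := by
  refine ⟨⟨?_, fun n => ?_⟩, fun n => hy.2 _⟩
  · obtain ⟨B, hB⟩ := hy.1.1
    exact ⟨B, fun n => hB _⟩
  · rw [fsR_shiftIterR]
    exact hy.1.2 _

lemma coe_mem_Xf_of_mem_YfSet {f : ℤ[X]} {y : ℤ → ℝ} (hy : y ∈ YfSet f) :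
    (fun k => (y k : Torus)) ∈ Xf f := by
  intro n
  obtain ⟨z, hz⟩ := hy.1.2 n
  rw [fsT_coe, hz, AddCircle.coe_eq_zero_iff]
  exact ⟨z, by simp⟩

/-- The entourage of `𝕋^ℤ` controlling the coordinates in `[-R, R]` up to `ε`. -/
def torusEntourage (R : ℕ) (ε : ℝ) : SetRel (ℤ → Torus) (ℤ → Torus) :=
  {p | ∀ j : ℤ, |j| ≤ R → ‖p.1 j - p.2 j‖ < ε}

lemma torusEntourage_mem_uniformity (R : ℕ) {ε : ℝ} (hε : 0 < ε) :
    torusEntourage R ε ∈ uniformity (ℤ → Torus) := by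
  have h : ∀ j : ℤ, {p : (ℤ → Torus) × (ℤ → Torus) | ‖p.1 j - p.2 j‖ < ε} ∈
      uniformity (ℤ → Torus) := by
    intro j
    have := Filter.mem_map.1
      (Pi.uniformContinuous_proj (fun _ : ℤ => Torus) j (Metric.dist_mem_uniformity hε))
    simp only [dist_eq_norm] at this
    exact this
  filter_upwards [(Filter.biInter_finset_mem (Finset.Icc (-(R : ℤ)) R)).2 fun j _ => h j]
    with p hp j hj
  exact Set.mem_iInter₂.1 hp j (Finset.mem_Icc.2 (abs_le.1 hj))

/-- The number of blocks of `f(Y_f)` is at most the size of a dynamical cover of `X_f` times a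
polynomial in the length. -/
lemma card_blocks_le {f : ℤ[X]} (hf : f ≠ 0) {ε : ℝ} (hε4 : ε ≤ 1 / 4)
    (hε : coeffNorm f * (2 * ε) < 1) (L n : ℕ) (hn : 0 < n) (s : Finset (ℤ → Torus))
    (hs : Dynamics.IsDynCoverOf shiftT (Xf f) (torusEntourage (L + f.natDegree) ε) n s)
    (F : Finset (Fin (n + 2 * L) → ℤ))
    (hF : ∀ β ∈ F, ∃ y ∈ YfSet f, ∀ i, (β i : ℝ) = fsR f y (i : ℕ)) :
    F.card ≤ (f.natDegree + 1) * (n + 2 * L + f.natDegree + 1) ^ f.natDegree * s.card := by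
  classical
  choose! y hyY hyβ using hF
  have hc : ∀ β ∈ F, ∃ c ∈ s, ∀ k : ℕ, k < n + 2 * L + f.natDegree →
      ‖(y β k : Torus) - c (k - L)‖ < ε := by
    intro β hβ
    obtain ⟨c, hcs, hc⟩ := hs (coe_mem_Xf_of_mem_YfSet (shiftIterR_mem_YfSet (L : ℤ) (hyY β hβ)))
    refine ⟨c, hcs, fun k hk => ?_⟩
    rw [Dynamics.mem_dynEntourage] at hc
    have h1 := hc (min (k - L) (n - 1)) (by omega) ((k : ℤ) - L - (min (k - L) (n - 1) : ℕ))
      (by rw [abs_le]; omega)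
    simp only [shiftT_iterate_apply, shiftIterR] at h1
    rw [sub_add_cancel, sub_add_cancel] at h1
    exact h1
  choose! c hcs hc using hc
  refine Finset.card_le_mul_card_image_of_maps_to (f := c) (fun β hβ => hcs β hβ) _ fun x _ => ?_
  refine card_blocks_near_le hf hε4 hε _ (fun k => x (k - L)) _ fun β hβ => ?_
  obtain ⟨hβF, rfl⟩ := Finset.mem_filter.1 hβ
  exact ⟨y β, hyY β hβF, hyβ β hβF, hc β hβF⟩

/-- Every finite block of a point of `Z̄_f` is a block of `f(σ̄) y` for some `y ∈ Y_f`. -/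
lemma exists_block_eq {f : ℤ[X]} {v : ℤ → ℤ} (hv : v ∈ ZbarZ f) (a : ℤ) (M : ℕ) :
    ∃ y ∈ YfSet f, ∀ i : Fin M, (v ((i : ℕ) + a) : ℝ) = fsR f y (i : ℕ) := by
  obtain ⟨y, hy, hvy⟩ := mem_ZbarZ_iff.1 hv
  have hO : {y' : ℤ → ℝ | ∀ i : Fin M, |fsR f y' ((i : ℕ) + a) - v ((i : ℕ) + a)| < 1} ∈ 𝓝 y := by
    simp only [Set.ofPred_forall]
    refine (Filter.iInter_mem).2 fun i => ?_
    refine (IsOpen.mem_nhds (isOpen_lt ?_ continuous_const) ?_)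
    · have := (continuous_apply ((i : ℕ) + a : ℤ)).comp (continuous_fsR f)
      exact (this.sub continuous_const).abs
    · simp [hvy]
  obtain ⟨y', hy', hyY⟩ := mem_closure_iff_nhds.1 hy _ hO
  refine ⟨shiftIterR a y', shiftIterR_mem_YfSet a hyY, fun i => ?_⟩
  rw [fsR_shiftIterR, shiftIterR]
  obtain ⟨z, hz⟩ := hyY.1.2 ((i : ℕ) + a)
  have h1 := hy' i
  rw [hz] at h1 ⊢
  have h2 : |z - v ((i : ℕ) + a)| < 1 := by exact_mod_cast h1
  rw [Int.abs_lt_one_iff, sub_eq_zero] at h2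
  rw [h2]

lemma exists_mem_of_mem_uniformity {U : SetRel ((ℤ → ℤ) × (ℤ →ᵇ ℝ)) ((ℤ → ℤ) × (ℤ →ᵇ ℝ))}
    (hU : U ∈ uniformity ((ℤ → ℤ) × (ℤ →ᵇ ℝ))) :
    ∃ L : ℕ, ∃ δ > 0, ∀ p q : (ℤ → ℤ) × (ℤ →ᵇ ℝ), (∀ j : ℤ, |j| ≤ L → p.1 j = q.1 j) →
      dist p.2 q.2 < δ → (p, q) ∈ U := by
  rw [uniformity_prod, Filter.mem_inf_iff_superset] at hU
  obtain ⟨A, hA, B, hB, hAB⟩ := hU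
  obtain ⟨A', hA', hAA⟩ := Filter.mem_comap.1 hA
  obtain ⟨B', hB', hBB⟩ := Filter.mem_comap.1 hB
  obtain ⟨δ, hδ, hδB⟩ := Metric.mem_uniformity_dist.1 hB'
  have hle : ⨅ j : ℤ, 𝓟 {p : (ℤ → ℤ) × (ℤ → ℤ) | p.1 j = p.2 j} ≤ uniformity (ℤ → ℤ) := by
    rw [Pi.uniformity]
    refine iInf_mono fun j => ?_
    rintro S hS
    obtain ⟨S', hS', hSS⟩ := Filter.mem_comap.1 hS
    refine Filter.mem_principal.2 fun p hp => hSS ?_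
    have hp' : p.1 j = p.2 j := hp
    rw [Set.mem_preimage, hp']
    exact refl_mem_uniformity hS'
  obtain ⟨J, hJ, hJA⟩ := (Filter.hasBasis_iInf_principal_finite _).mem_iff.1 (hle hA')
  obtain ⟨L, hL⟩ := (hJ.image Int.natAbs).bddAbove
  refine ⟨L, δ, hδ, fun p q h1 h2 => hAB ⟨hAA (hJA ?_), hBB (hδB h2)⟩⟩
  refine Set.mem_iInter₂.2 fun j hj => h1 j ?_
  have := hL ⟨j, hj, rfl⟩
  rw [Int.abs_eq_natAbs]
  exact_mod_cast this

lemma tauMap_iterate_fst (w0 : ℤ →ᵇ ℝ) (p : (ℤ → ℤ) × (ℤ →ᵇ ℝ)) (k : ℕ) (j : ℤ) :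
    ((tauMap w0)^[k] p).1 j = p.1 (j + k) := by
  induction k generalizing j with
  | zero => simp
  | succ k ih =>
    rw [Function.iterate_succ_apply']
    change ((tauMap w0)^[k] p).1 (j + 1) = _
    rw [ih]
    push_cast
    ring_nf

/-- `τ` acts isometrically on the second coordinates of points with the same first coordinate. -/
lemma dist_tauMap_iterate_snd (w0 : ℤ →ᵇ ℝ) (p q : (ℤ → ℤ) × (ℤ →ᵇ ℝ)) (k : ℕ)
    (h : ∀ i : ℕ, i < k → p.1 i = q.1 i) :
    dist ((tauMap w0)^[k] p).2 ((tauMap w0)^[k] q).2 = dist p.2 q.2 := by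
  induction k with
  | zero => rfl
  | succ k ih =>
    rw [← ih fun i hi => h i (by omega), Function.iterate_succ_apply', Function.iterate_succ_apply']
    change dist (shiftB _ + _) (shiftB _ + _) = _
    rw [tauMap_iterate_fst, tauMap_iterate_fst, zero_add, h k (by omega), dist_add_right,
      dist_eq_norm, dist_eq_norm]
    exact norm_translB 1 (((tauMap w0)^[k] p).2 - ((tauMap w0)^[k] q).2)

lemma exists_coverMincard_le {f : ℤ[X]} (hf : f ≠ 0) (w0 : ℤ →ᵇ ℝ)
    {C : Set ((ℤ → ℤ) × (ℤ →ᵇ ℝ))} (hC : IsCompact C) (hCfst : Prod.fst '' C ⊆ ZbarZ f)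
    {U : SetRel ((ℤ → ℤ) × (ℤ →ᵇ ℝ)) ((ℤ → ℤ) × (ℤ →ᵇ ℝ))}
    (hU : U ∈ uniformity ((ℤ → ℤ) × (ℤ →ᵇ ℝ))) :
    ∃ V ∈ uniformity (ℤ → Torus), ∃ B K : ℕ, ∀ n : ℕ, 0 < n →
      Dynamics.coverMincard (tauMap w0) C U n ≤
        (B * (n + K) ^ f.natDegree : ℕ) * Dynamics.coverMincard shiftT (Xf f) V n := by
  classical
  obtain ⟨L, δ, hδ, hUδ⟩ := exists_mem_of_mem_uniformity hU
  obtain ⟨t, -, htfin, ht⟩ := (hC.image continuous_snd).finite_cover_balls (half_pos hδ)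
  lift t to Finset (ℤ →ᵇ ℝ) using htfin
  set ε : ℝ := 1 / (4 * (coeffNorm f + 1)) with hεdef
  have hN := coeffNorm_nonneg f
  have hε0 : 0 < ε := by positivity
  have hε4 : ε ≤ 1 / 4 := by
    rw [hεdef]
    exact one_div_le_one_div_of_le (by norm_num) (by linarith)
  have hε : coeffNorm f * (2 * ε) < 1 := by
    rw [hεdef]
    field_simp
    linarith
  refine ⟨torusEntourage (L + f.natDegree) ε, torusEntourage_mem_uniformity _ hε0,
    t.card * (f.natDegree + 1), 2 * L + f.natDegree + 1, fun n hn => ?_⟩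
  obtain ⟨s, hs, hscard⟩ := (Dynamics.coverMincard_finite_iff _ _ _ _).1
    (Dynamics.coverMincard_finite_of_isCompact_invariant (isCompact_Xf f)
      (fun x hx => shiftT_mem_Xf hx) (torusEntourage_mem_uniformity (L + f.natDegree) hε0) n)
  set block : (ℤ → ℤ) × (ℤ →ᵇ ℝ) → Fin (n + 2 * L) → ℤ :=
    fun p i => p.1 ((i : ℕ) + -(L : ℤ)) with hblock
  have hfin : (block '' C).Finite := by
    refine (Set.finite_Icc (fun _ : Fin (n + 2 * L) => -⌈coeffNorm f⌉)
      fun _ => ⌈coeffNorm f⌉).subset ?_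
    rintro _ ⟨p, hp, rfl⟩
    have hb : ∀ i, |block p i| ≤ ⌈coeffNorm f⌉ := fun i => by
      have := (abs_le_of_mem_ZbarZ (hCfst ⟨p, hp, rfl⟩) ((i : ℕ) + -(L : ℤ))).trans
        (Int.le_ceil (coeffNorm f))
      exact_mod_cast this
    exact ⟨fun i => (abs_le.1 (hb i)).1, fun i => (abs_le.1 (hb i)).2⟩
  have hGcard := card_blocks_le hf hε4 hε L n hn s hs hfin.toFinset fun β hβ => by
    obtain ⟨p, hp, rfl⟩ := hfin.mem_toFinset.1 hβ
    exact exists_block_eq (hCfst ⟨p, hp, rfl⟩) (-(L : ℤ)) (n + 2 * L)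
  have hrep : ∀ x : (Fin (n + 2 * L) → ℤ) × (ℤ →ᵇ ℝ), ∃ r : (ℤ → ℤ) × (ℤ →ᵇ ℝ),
      ∀ p, block p = x.1 → dist p.2 x.2 < δ / 2 → block r = x.1 ∧ dist r.2 x.2 < δ / 2 := by
    intro x
    by_cases h : ∃ p, block p = x.1 ∧ dist p.2 x.2 < δ / 2
    · obtain ⟨p, hp⟩ := h
      exact ⟨p, fun _ _ _ => hp⟩
    · exact ⟨0, fun p h1 h2 => (h ⟨p, h1, h2⟩).elim⟩
  choose rep hrep using hrep
  have hcover : Dynamics.IsDynCoverOf (tauMap w0) C U n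
      ((hfin.toFinset ×ˢ t).image rep : Finset _) := by
    intro p hp
    obtain ⟨q, hqt, hq⟩ := Set.mem_iUnion₂.1 (ht ⟨p, hp, rfl⟩)
    obtain ⟨h1, h2⟩ := hrep (block p, q) p rfl hq
    refine ⟨rep (block p, q), Finset.mem_coe.2 (Finset.mem_image_of_mem _
      (Finset.mem_product.2 ⟨hfin.mem_toFinset.2 ⟨p, hp, rfl⟩, hqt⟩)), ?_⟩
    have hagree : ∀ j : ℤ, -(L : ℤ) ≤ j → j < n + L → p.1 j = (rep (block p, q)).1 j := by
      intro j hj1 hj2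
      have h3 := congrFun h1 ⟨(j + L).toNat, by omega⟩
      simp only [hblock] at h3
      have h4 : (((j + L).toNat : ℕ) : ℤ) + -(L : ℤ) = j := by omega
      rw [h4] at h3
      exact h3.symm
    rw [Dynamics.mem_dynEntourage]
    intro k hk
    refine hUδ _ _ (fun j hj => ?_) ?_
    · rw [tauMap_iterate_fst, tauMap_iterate_fst]
      rw [abs_le] at hj
      exact hagree _ (by omega) (by omega)
    · rw [dist_tauMap_iterate_snd w0 _ _ k fun i hi => hagree i (by omega) (by omega)]
      have hq' : dist p.2 q < δ / 2 := hq
      exact (dist_triangle_right _ _ q).trans_lt (by linarith)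
  refine hcover.coverMincard_le_card.trans ?_
  rw [← hscard]
  have hle : ((hfin.toFinset ×ˢ t).image rep).card ≤
      t.card * (f.natDegree + 1) * (n + (2 * L + f.natDegree + 1)) ^ f.natDegree * s.card := by
    refine Finset.card_image_le.trans ?_
    rw [Finset.card_product]
    refine (Nat.mul_le_mul_right _ hGcard).trans_eq ?_
    rw [show n + (2 * L + f.natDegree + 1) = n + 2 * L + f.natDegree + 1 by ring]
    ring
  exact_mod_cast hle

/-- Polynomials have vanishing exponential growth rate. -/
lemma expGrowthSup_polynomial_le (B K m : ℕ) :
    ExpGrowth.expGrowthSup (fun n : ℕ => ((B * (n + K) ^ m : ℕ) : ENNReal)) ≤ 0 := by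
  refine EReal.le_of_forall_lt_iff_le.1 fun b hb => Eventually.expGrowthSup_le ?_
  have hb' : 0 < b := by exact_mod_cast hb
  have ho := (isLittleO_pow_exp_pos_mul_atTop (k := m) hb').comp_tendsto
    (tendsto_atTop_add_const_right atTop (K : ℝ) tendsto_natCast_atTop_atTop)
  filter_upwards [ho.bound (c := ((B + 1) * Real.exp (b * K))⁻¹) (by positivity)] with n hn
  have he : EReal.exp ((b : EReal) * n) = ENNReal.ofReal (Real.exp (b * n)) := by
    rw [← EReal.exp_coe]
    push_cast
    rfl
  rw [he, ← ENNReal.ofReal_natCast]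
  refine ENNReal.ofReal_le_ofReal ?_
  simp only [Function.comp_apply, norm_pow, Real.norm_eq_abs, Real.abs_exp] at hn
  rw [abs_of_nonneg (by positivity), mul_add, Real.exp_add] at hn
  have h2 : (B + 1 : ℝ) * ((n : ℝ) + K) ^ m ≤ Real.exp (b * n) := by
    calc _ ≤ (B + 1 : ℝ) * (((B + 1) * Real.exp (b * K))⁻¹ *
          (Real.exp (b * n) * Real.exp (b * K))) := by gcongr
      _ = _ := by field_simp
  push_cast
  exact le_trans (by gcongr; linarith) h2

lemma coverEntropy_tauMap_le {f : ℤ[X]} (hf : f ≠ 0) (w0 : ℤ →ᵇ ℝ)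
    {C : Set ((ℤ → ℤ) × (ℤ →ᵇ ℝ))} (hC : IsCompact C) (hCfst : Prod.fst '' C ⊆ ZbarZ f) :
    Dynamics.coverEntropy (tauMap w0) C ≤ Dynamics.coverEntropy shiftT (Xf f) := by
  refine iSup₂_le fun U hU => ?_
  obtain ⟨V, hV, B, K, h⟩ := exists_coverMincard_le hf w0 hC hCfst hU
  refine le_trans ?_ (Dynamics.coverEntropyEntourage_le_coverEntropy shiftT (Xf f) hV)
  have h0 : 0 ≤ Dynamics.coverEntropyEntourage shiftT (Xf f) V :=
    Dynamics.coverEntropyEntourage_nonneg _ ⟨0, fun n => by simp [fsT]⟩ _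
  have hp := expGrowthSup_polynomial_le B K f.natDegree
  set P : ℕ → ENNReal := fun n : ℕ => ((B * (n + K) ^ f.natDegree : ℕ) : ENNReal)
  have hle : Dynamics.coverEntropyEntourage (tauMap w0) C U ≤ ExpGrowth.expGrowthSup
      (P * fun n => (Dynamics.coverMincard shiftT (Xf f) V n : ENNReal)) := by
    refine ExpGrowth.expGrowthSup_eventually_monotone ?_
    filter_upwards [eventually_gt_atTop 0] with n hn
    have := ENat.toENNReal_le.2 (h n hn)
    rwa [ENat.toENNReal_mul, ENat.toENNReal_coe] at this
  refine hle.trans ((ExpGrowth.expGrowthSup_mul_le (Or.inr ?_) (Or.inl ?_)).trans ?_)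
  · exact (Dynamics.coverEntropyEntourage_finite_of_isCompact_invariant (isCompact_Xf f)
      (fun x hx => shiftT_mem_Xf hx) hV).ne
  · exact ne_top_of_le_ne_top EReal.zero_ne_top hp
  · calc _ ≤ 0 + Dynamics.coverEntropyEntourage shiftT (Xf f) V := add_le_add hp le_rfl
      _ = _ := zero_add _

/-- The entropy of `α_f` is at most that of `τ` on any compact invariant set mapped onto `X_f`. -/
lemma le_coverEntropy_tauMap {f : ℤ[X]} (hf : f ≠ 0) {wp wm : ℤ → ℝ} (hwp : IsWplus f wp)
    (hwm : IsWminus f wm) {w0 : ℤ →ᵇ ℝ} (hw0 : ∀ n, w0 n = wm n - wp n)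
    {C : Set ((ℤ → ℤ) × (ℤ →ᵇ ℝ))} (hC : IsCompact C) (hCZ : ∀ p ∈ C, p.1 ∈ ZbarZ f)
    (hCinv : Set.MapsTo (tauMap w0) C C) (hζ : zetaMap wp wm '' C = Xf f) :
    Dynamics.coverEntropy shiftT (Xf f) ≤ Dynamics.coverEntropy (tauMap w0) C := by
  have : CompactSpace C := isCompact_iff_compactSpace.1 hC
  have hcont : Continuous fun p : C => zetaMap wp wm p :=
    continuousOn_iff_continuous_domRestrict.1 (continuousOn_zetaMap hf hwp hwm hCZ)
  have hsemi : Function.Semiconj (fun p : C => zetaMap wp wm p)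
      (hCinv.restrict (tauMap w0) C C) shiftT :=
    fun p => zetaMap_tauMap hf hwp hwm hw0 (bdd_of_mem_ZbarZ (hCZ p p.2))
  have h := Dynamics.coverEntropy_image_le_of_uniformContinuous hsemi
    (CompactSpace.uniformContinuous_of_continuous hcont) Set.univ
  rw [Dynamics.coverEntropy_restrict hCinv] at h
  rwa [← hζ, show zetaMap wp wm '' C = (fun p : C => zetaMap wp wm p) '' Set.univ by
    ext x; simp]

/-- there is a compact `τ`-invariant set `C ⊆ Z̄_f × W_f^∘` with
`π₁(C) = Z̄_f`; moreover every such `C` satisfies `h(τ|_C) = h(α_f)` and `ζ(C) = X_f`. -/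
theorem equal_entropy_cover_nonexpansive (f : Polynomial ℤ) (hm : 1 ≤ f.natDegree)
    (hlead : 0 < f.leadingCoeff) (h0 : f.coeff 0 ≠ 0)
    (hirr : Irreducible (Polynomial.toLaurent f)) (hnc : Noncyclotomic f)
    (wp wm : ℤ → ℝ) (hwp : IsWplus f wp) (hwm : IsWminus f wm)
    (w0 : ℤ →ᵇ ℝ) (hw0 : ∀ n, w0 n = wm n - wp n) :
    (∃ C : Set ((ℤ → ℤ) × (ℤ →ᵇ ℝ)), IsCompact C ∧
      C ⊆ (ZbarZ f) ×ˢ (WfCircB f) ∧ tauMap w0 '' C = C ∧ Prod.fst '' C = ZbarZ f) ∧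
    (∀ C : Set ((ℤ → ℤ) × (ℤ →ᵇ ℝ)), IsCompact C →
      C ⊆ (ZbarZ f) ×ˢ (WfCircB f) → tauMap w0 '' C = C → Prod.fst '' C = ZbarZ f →
      Dynamics.coverEntropy (tauMap w0) C = Dynamics.coverEntropy shiftT (Xf f) ∧
      zetaMap wp wm '' C = Xf f) := by
  have hf : f ≠ 0 := by
    rintro rfl
    simp at hm
  refine ⟨⟨canonicalCover f w0, isCompact_canonicalCover f w0,
    canonicalCover_subset (diff_mem_centralSubmodule hwp hwm hw0),
    tauMap_image_canonicalCover hf hwp hwm hw0, fst_image_canonicalCover f w0⟩,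
    fun C hC hCsub hCinv hCfst => ?_⟩
  have hζ := zetaMap_image_eq hm h0 hirr hnc hwp hwm hw0 hC hCsub hCinv hCfst
  exact ⟨le_antisymm (coverEntropy_tauMap_le hf w0 hC hCfst.subset)
    (le_coverEntropy_tauMap hf hwp hwm hw0 hC (fun p hp => (hCsub hp).1)
      (Set.mapsTo_iff_image_subset.2 hCinv.subset) hζ), hζ⟩

end
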